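/- arXiv:1306.4299 — 8 statements merged into one kernel-verified Lean document; each statement's English description precedes it below -/
import Mathlib

section
/- Let G be a connected finite simple graph on n vertices and let S = S_1 ∪ … ∪ S_k be an equitable partition of V(G). Then for every α ∈ (0, π/2), S is an α-Kuramoto partition of G; that is, there exists a solution θ_1, …, θ_n of the frustrated Kuramoto model on G such that θ_i(t) = θ_j(t) for all t ≥ 0 whenever i and j lie in the same part, and θ_i ≠ θ_j as functions on [0,∞) whenever i and j lie in different parts. -/
open scoped Classical

/-- The right-hand side of the frustrated Kuramoto model at vertex `i`, time `t`:
`∑_j A_{i,j} sin(θ_j(t) - θ_i(t) - α)`. -/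
noncomputable def kuramotoDeriv {n : ℕ} (G : SimpleGraph (Fin n)) (α : ℝ)
    (θ : Fin n → ℝ → ℝ) (i : Fin n) (t : ℝ) : ℝ :=
  ∑ j : Fin n, if G.Adj i j then Real.sin (θ j t - θ i t - α) else 0

/-- `θ` is a solution of the frustrated Kuramoto model on `G` with frustration `α`:
each `θ i` is differentiable on `[0, ∞)` with derivative given by the Kuramoto
right-hand side. -/
def IsKuramotoSol {n : ℕ} (G : SimpleGraph (Fin n)) (α : ℝ)
    (θ : Fin n → ℝ → ℝ) : Prop :=
  ∀ i : Fin n, ∀ t ∈ Set.Ici (0 : ℝ),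
    HasDerivWithinAt (θ i) (kuramotoDeriv G α θ i t) (Set.Ici 0) t

/-- The partition of `Fin n` given by the fibres of `P : Fin n → Fin k` is equitable:
the number of neighbours in part `m` of a vertex `u` depends only on the part of `u`. -/
def IsEquitable {n k : ℕ} (G : SimpleGraph (Fin n)) (P : Fin n → Fin k) : Prop :=
  ∀ u v : Fin n, P u = P v → ∀ m : Fin k,
    (Finset.univ.filter fun w => G.Adj u w ∧ P w = m).card =
      (Finset.univ.filter fun w => G.Adj v w ∧ P w = m).card

/-- The partition given by the fibres of `P` is an `α`-Kuramoto partition: there is a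
solution of the frustrated Kuramoto model whose phases agree (for all `t ≥ 0`) exactly
within the parts. -/
def IsAlphaKuramoto {n k : ℕ} (G : SimpleGraph (Fin n)) (α : ℝ)
    (P : Fin n → Fin k) : Prop :=
  ∃ θ : Fin n → ℝ → ℝ, IsKuramotoSol G α θ ∧
    (∀ i j : Fin n, P i = P j → Set.EqOn (θ i) (θ j) (Set.Ici 0)) ∧
    (∀ i j : Fin n, P i ≠ P j → ¬ Set.EqOn (θ i) (θ j) (Set.Ici 0))

/-!
An equitable partition with quotient matrix `γ` turns the model on `G` into the smaller system
`φ_m' = ∑_l γ_{m,l} sin(φ_l - φ_m - α)` on the parts: if `φ` solves it, then `θ_i = φ_{P i}` solves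
the model on `G`. The quotient vector field is smooth and globally Lipschitz, so it has an integral
curve starting at any prescribed point; starting it at pairwise distinct phases separates the parts
already at time `0`.
-/

open Set
open scoped NNReal Manifold ContDiff

section GlobalExistence

variable {E : Type*} [NormedAddCommGroup E] [NormedSpace ℝ E]

lemma isMIntegralCurveOn_iff_isIntegralCurveOn {γ : ℝ → E} {F : E → E} {s : Set ℝ} :
    IsMIntegralCurveOn (I := 𝓘(ℝ, E)) γ F s ↔ IsIntegralCurveOn γ (fun _ ↦ F) s :=
  forall₂_congr fun _ _ ↦ hasMFDerivWithinAt_iff_hasFDerivWithinAt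

lemma isMIntegralCurve_iff_isIntegralCurve {γ : ℝ → E} {F : E → E} :
    IsMIntegralCurve (I := 𝓘(ℝ, E)) γ F ↔ IsIntegralCurve γ (fun _ ↦ F) :=
  forall_congr' fun _ ↦ hasMFDerivAt_iff_hasFDerivAt

variable [CompleteSpace E] {F : E → E} {K : ℝ≥0}

-- On the ball of radius `‖F x‖` around `x` the field is bounded by `(1 + K) * ‖F x‖`, so the
-- Picard-Lindelöf existence time `(1 + K)⁻¹` does not depend on `x`.
lemma exists_isIntegralCurveOn_Ioo_of_lipschitzWith (hF : LipschitzWith K F) (x : E) :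
    ∃ γ : ℝ → E, γ 0 = x ∧
      IsIntegralCurveOn γ (fun _ ↦ F) (Ioo (-(1 + K : ℝ)⁻¹) (1 + K : ℝ)⁻¹) := by
  set ε : ℝ := (1 + K : ℝ)⁻¹ with hε
  have hε_pos : 0 < ε := by positivity
  have norm_le : ∀ y ∈ Metric.closedBall x ‖F x‖₊, ‖F y‖ ≤ ((1 + K) * ‖F x‖₊ : ℝ≥0) := by
    intro y hy
    calc ‖F y‖ ≤ ‖F x‖ + ‖F y - F x‖ := norm_le_norm_add_norm_sub' _ _
      _ ≤ ‖F x‖ + K * ‖y - x‖ := by gcongr; exact hF.norm_sub_le y x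
      _ ≤ ‖F x‖ + K * ‖F x‖ := by gcongr; exact mem_closedBall_iff_norm.1 hy
      _ = ((1 + K) * ‖F x‖₊ : ℝ≥0) := by push_cast; ring
  have picard : IsPicardLindelof (fun _ ↦ F)
      (⟨0, neg_nonpos.2 hε_pos.le, hε_pos.le⟩ : Icc (-ε) ε) x ‖F x‖₊ 0 ((1 + K) * ‖F x‖₊) K := by
    refine .of_time_independent norm_le hF.lipschitzOnWith (le_of_eq ?_)
    simp only [sub_zero, zero_sub, neg_neg, max_self, hε]
    push_cast
    field_simp
    simp
  obtain ⟨γ, hγ₀, hγ⟩ := picard.exists_eq_forall_mem_Icc_hasDerivWithinAt₀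
  exact ⟨γ, hγ₀, IsIntegralCurveOn.mono hγ Ioo_subset_Icc_self⟩

theorem exists_isIntegralCurve_of_lipschitzWith_of_contDiff (hF : LipschitzWith K F)
    (hF' : ContDiff ℝ 1 F) (x : E) :
    ∃ γ : ℝ → E, γ 0 = x ∧ IsIntegralCurve γ (fun _ ↦ F) := by
  simp only [← isMIntegralCurve_iff_isIntegralCurve]
  refine exists_isMIntegralCurve_of_isMIntegralCurveOn
    (contMDiff_vectorSpace_iff_contDiff.2 hF') (ε := (1 + K : ℝ)⁻¹) (by positivity) ?_ x
  simpa only [isMIntegralCurveOn_iff_isIntegralCurveOn] using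
    exists_isIntegralCurveOn_Ioo_of_lipschitzWith hF

end GlobalExistence

section WeightedField

variable {ι : Type*} [Fintype ι]

/-- The vector field of the frustrated Kuramoto model on the weighted directed graph with adjacency
matrix `W`. Weights are arbitrary reals, so that quotient matrices, which need be neither symmetric
nor zero on the diagonal, are covered. -/
noncomputable def weightedKuramotoField (W : Matrix ι ι ℝ) (α : ℝ) (φ : ι → ℝ) : ι → ℝ :=
  fun i ↦ ∑ j, W i j * Real.sin (φ j - φ i - α)

lemma contDiff_weightedKuramotoField (W : Matrix ι ι ℝ) (α : ℝ) :
    ContDiff ℝ ∞ (weightedKuramotoField W α) := by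
  unfold weightedKuramotoField
  fun_prop

lemma abs_sin_phaseDiff_sub_le (α : ℝ) (φ ψ : ι → ℝ) (i j : ι) :
    |Real.sin (φ j - φ i - α) - Real.sin (ψ j - ψ i - α)| ≤ 2 * dist φ ψ :=
  calc |Real.sin (φ j - φ i - α) - Real.sin (ψ j - ψ i - α)|
      ≤ |(φ j - φ i - α) - (ψ j - ψ i - α)| := Real.abs_sin_sub_sin_le _ _
    _ = |(φ j - ψ j) - (φ i - ψ i)| := by ring_nf
    _ ≤ dist (φ j) (ψ j) + dist (φ i) (ψ i) := abs_sub _ _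
    _ ≤ 2 * dist φ ψ := by
      linarith [dist_le_pi_dist φ ψ i, dist_le_pi_dist φ ψ j]

lemma lipschitzWith_weightedKuramotoField (W : Matrix ι ι ℝ) (α : ℝ) :
    LipschitzWith (2 * ∑ i, ∑ j, ‖W i j‖₊) (weightedKuramotoField W α) := by
  refine .of_dist_le_mul fun φ ψ ↦ (dist_pi_le_iff (by positivity)).2 fun i ↦ ?_
  calc dist (weightedKuramotoField W α φ i) (weightedKuramotoField W α ψ i)
      = |∑ j, W i j * (Real.sin (φ j - φ i - α) - Real.sin (ψ j - ψ i - α))| := by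
        simp only [weightedKuramotoField, Real.dist_eq, mul_sub, Finset.sum_sub_distrib]
    _ ≤ ∑ j, |W i j| * |Real.sin (φ j - φ i - α) - Real.sin (ψ j - ψ i - α)| := by
        simpa only [abs_mul] using Finset.abs_sum_le_sum_abs
          (fun j ↦ W i j * (Real.sin (φ j - φ i - α) - Real.sin (ψ j - ψ i - α))) Finset.univ
    _ ≤ ∑ j, |W i j| * (2 * dist φ ψ) := by
        gcongr with j
        exact abs_sin_phaseDiff_sub_le α φ ψ i j
    _ = (∑ j, |W i j|) * (2 * dist φ ψ) := (Finset.sum_mul _ _ _).symm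
    _ ≤ (∑ i, ∑ j, |W i j|) * (2 * dist φ ψ) := by
        have row_le : ∑ j, |W i j| ≤ ∑ i, ∑ j, |W i j| :=
          Finset.single_le_sum (f := fun i ↦ ∑ j, |W i j|) (fun _ _ ↦ by positivity)
            (Finset.mem_univ i)
        exact mul_le_mul_of_nonneg_right row_le (by positivity)
    _ = (2 * ∑ i, ∑ j, ‖W i j‖₊ : ℝ≥0) * dist φ ψ := by
        push_cast
        simp only [Real.norm_eq_abs]
        ring

theorem exists_isIntegralCurve_weightedKuramotoField (W : Matrix ι ι ℝ) (α : ℝ) (φ₀ : ι → ℝ) :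
    ∃ φ : ℝ → ι → ℝ, φ 0 = φ₀ ∧ IsIntegralCurve φ (fun _ ↦ weightedKuramotoField W α) :=
  exists_isIntegralCurve_of_lipschitzWith_of_contDiff (lipschitzWith_weightedKuramotoField W α)
    ((contDiff_weightedKuramotoField W α).of_le (by simp)) φ₀

end WeightedField

section Quotient

lemma sum_ite_comp_eq_sum_card_nsmul {V κ M : Type*} [Fintype V] [Fintype κ] [DecidableEq κ]
    [AddCommMonoid M] (p : V → Prop) [DecidablePred p] (P : V → κ) (g : κ → M) :
    (∑ w, if p w then g (P w) else 0) =
      ∑ m, (Finset.univ.filter fun w ↦ p w ∧ P w = m).card • g m := by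
  rw [← Finset.sum_filter, ← Finset.sum_fiberwise' _ P g]
  simp only [Finset.filter_filter, Finset.sum_const]

variable {n k : ℕ} {G : SimpleGraph (Fin n)} {P : Fin n → Fin k}

/-- The quotient matrix of the partition of `G` into the fibres of `P`: for an equitable partition,
the entry `(l, m)` is the number `γ_{l,m}` of neighbours in part `m` of any vertex of part `l`.
Rows of empty parts are zero. -/
noncomputable def quotientMatrix (G : SimpleGraph (Fin n)) (P : Fin n → Fin k) :
    Matrix (Fin k) (Fin k) ℕ :=
  Function.extend P (fun u m ↦ (Finset.univ.filter fun w ↦ G.Adj u w ∧ P w = m).card) 0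

namespace IsEquitable

lemma quotientMatrix_apply (heq : IsEquitable G P) (u : Fin n) (m : Fin k) :
    quotientMatrix G P (P u) m = (Finset.univ.filter fun w ↦ G.Adj u w ∧ P w = m).card := by
  have factors : Function.FactorsThrough
      (fun u m ↦ (Finset.univ.filter fun w ↦ G.Adj u w ∧ P w = m).card) P :=
    fun u v huv ↦ funext (heq u v huv)
  exact congrFun (factors.extend_apply 0 u) m

lemma kuramotoDeriv_comp_eq (heq : IsEquitable G P) (α : ℝ) (φ : ℝ → Fin k → ℝ) (i : Fin n)
    (t : ℝ) :
    kuramotoDeriv G α (fun j t ↦ φ t (P j)) i t =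
      weightedKuramotoField ((quotientMatrix G P).map (↑)) α (φ t) (P i) := by
  simp only [kuramotoDeriv, weightedKuramotoField, Matrix.map_apply, heq.quotientMatrix_apply,
    ← nsmul_eq_mul]
  exact sum_ite_comp_eq_sum_card_nsmul (G.Adj i) P fun m ↦ Real.sin (φ t m - φ t (P i) - α)

lemma isKuramotoSol_comp (heq : IsEquitable G P) {α : ℝ} {φ : ℝ → Fin k → ℝ}
    (hφ : IsIntegralCurveOn φ
      (fun _ ↦ weightedKuramotoField ((quotientMatrix G P).map (↑)) α) (Ici 0)) :
    IsKuramotoSol G α fun i t ↦ φ t (P i) := by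
  intro i t ht
  rw [heq.kuramotoDeriv_comp_eq]
  exact hasDerivWithinAt_pi.1 (hφ t ht) (P i)

end IsEquitable

end Quotient

theorem equitable_isAlphaKuramoto_general {n k : ℕ} (G : SimpleGraph (Fin n))
    (P : Fin n → Fin k) (heq : IsEquitable G P) (α : ℝ) : IsAlphaKuramoto G α P := by
  obtain ⟨φ, hφ₀, hφ⟩ := exists_isIntegralCurve_weightedKuramotoField
    ((quotientMatrix G P).map (↑)) α fun m ↦ (m : ℕ)
  refine ⟨fun i t ↦ φ t (P i), heq.isKuramotoSol_comp (hφ.isIntegralCurveOn _), ?_, ?_⟩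
  · intro i j hij t _
    simp only [hij]
  · intro i j hij h
    have phases_eq : φ 0 (P i) = φ 0 (P j) := h self_mem_Ici
    simp only [hφ₀, Nat.cast_inj] at phases_eq
    exact hij (Fin.ext phases_eq)

/-- **Theorem (equitable ⟹ α-Kuramoto).** Every equitable partition of a connected graph
is an `α`-Kuramoto partition, for every `α ∈ (0, π/2)`. -/
theorem equitable_isAlphaKuramoto {n k : ℕ} (G : SimpleGraph (Fin n))
    (hconn : G.Connected) (P : Fin n → Fin k) (hsurj : Function.Surjective P)
    (heq : IsEquitable G P) (α : ℝ) (hα : α ∈ Set.Ioo 0 (Real.pi / 2)) :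
    IsAlphaKuramoto G α P :=
  equitable_isAlphaKuramoto_general G P heq α
end

section
/- Let G be a connected finite simple graph on n vertices with an equitable partition S_1, …, S_k with parameters γ_{i,j}, and let α ∈ (0, π/2). Suppose f_1, …, f_k : [0,∞) → ℝ are differentiable functions satisfying the quotient system f_i'(t) = Σ_{j=1}^k γ_{i,j} sin(f_j(t) − f_i(t) − α) for all t ≥ 0 and i = 1,…,k. Define θ_p(t) := f_i(t) for each vertex p ∈ S_i. Then θ_1, …, θ_n is a solution of the frustrated Kuramoto model on G, i.e. θ_p'(t) = Σ_{q=1}^n A_{p,q} sin(θ_q(t) − θ_p(t) − α) for all t ≥ 0 and all p. -/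
open scoped Classical

section EquitablePartition

variable {V ι : Type*} [Fintype V] [DecidableEq ι]

/-- The fibres of `P` form an equitable partition of `G` with parameters `γ`: every vertex of the
cell `P ⁻¹' {i}` has exactly `γ i j` neighbours in the cell `P ⁻¹' {j}`. The partition is encoded
by its labelling `P`, and cells are allowed to be empty. -/
def IsEquitablePartition (G : SimpleGraph V) [DecidableRel G.Adj] (P : V → ι)
    (γ : ι → ι → ℕ) : Prop :=
  ∀ (u : V) (m : ι), (Finset.univ.filter fun w => G.Adj u w ∧ P w = m).card = γ (P u) m

variable [Fintype ι] {G : SimpleGraph V} [DecidableRel G.Adj] {P : V → ι} {γ : ι → ι → ℕ}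

theorem IsEquitablePartition.sum_ite_adj_eq_sum_nsmul {M : Type*} [AddCommMonoid M]
    (hP : IsEquitablePartition G P γ) (g : ι → M) (u : V) :
    (∑ w, if G.Adj u w then g (P w) else 0) = ∑ m, γ (P u) m • g m := by
  calc (∑ w, if G.Adj u w then g (P w) else 0)
      = ∑ w with G.Adj u w, g (P w) := (Finset.sum_filter _ _).symm
    _ = ∑ m, ∑ w with G.Adj u w ∧ P w = m, g m := by
      simp only [← Finset.sum_fiberwise' _ P, Finset.filter_filter]
    _ = ∑ m, γ (P u) m • g m := by simp only [Finset.sum_const, hP u]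

theorem quotient_solution_lifts_general {𝕜 E : Type*} [NontriviallyNormedField 𝕜]
    [NormedAddCommGroup E] [NormedSpace 𝕜 E] (hP : IsEquitablePartition G P γ)
    (coupling : E → E → E) {s : Set 𝕜} {f : ι → 𝕜 → E}
    (hf : ∀ i, ∀ t ∈ s,
      HasDerivWithinAt (f i) (∑ j, γ i j • coupling (f i t) (f j t)) s t) :
    ∀ p, ∀ t ∈ s, HasDerivWithinAt (f (P p))
      (∑ q, if G.Adj p q then coupling (f (P p) t) (f (P q) t) else 0) s t := by
  intro p t ht
  rw [hP.sum_ite_adj_eq_sum_nsmul fun m => coupling (f (P p) t) (f m t)]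
  exact hf (P p) t ht

end EquitablePartition

/-- **Theorem (lifting solutions of the quotient system).** If `P` is an equitable
partition with parameters `γ` and `f` solves the quotient system
`fᵢ' = ∑ⱼ γᵢⱼ sin(fⱼ - fᵢ - α)` on `[0, ∞)`, then `θ_p := f (P p)` solves the
frustrated Kuramoto model on `G`. -/
theorem quotient_solution_lifts {n k : ℕ} (G : SimpleGraph (Fin n))
    (hconn : G.Connected) (P : Fin n → Fin k) (hsurj : Function.Surjective P)
    (γ : Fin k → Fin k → ℕ)
    (hγ : ∀ u : Fin n, ∀ m : Fin k,
      (Finset.univ.filter fun w => G.Adj u w ∧ P w = m).card = γ (P u) m)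
    (α : ℝ) (hα : α ∈ Set.Ioo 0 (Real.pi / 2))
    (f : Fin k → ℝ → ℝ)
    (hf : ∀ i : Fin k, ∀ t ∈ Set.Ici (0 : ℝ),
      HasDerivWithinAt (f i)
        (∑ j : Fin k, (γ i j : ℝ) * Real.sin (f j t - f i t - α)) (Set.Ici 0) t) :
    IsKuramotoSol G α (fun p => f (P p)) := by
  simp only [← nsmul_eq_mul] at hf
  exact quotient_solution_lifts_general hγ (fun x y => Real.sin (y - x - α)) hf
end

section
/- Let G be a connected finite simple graph on n vertices, let 1 ≤ k ≤ n−1, set S_1 = {1,…,k}, S_2 = {k+1,…,n}, and for each vertex i let δ_{i,1} and δ_{i,2} denote the number of neighbours of i in S_1 and in S_2 respectively. Let α ∈ (0, π/2) and let θ_1, …, θ_n be a solution of the frustrated Kuramoto model on G such that: θ_i(t) − θ_j(t) → 0 as t → ∞ for all i, j ∈ S_1; θ_p(t) − θ_q(t) → 0 as t → ∞ for all p, q ∈ S_2; and θ_i(t) − θ_p(t) does not converge to 0 for some i ∈ S_1 and p ∈ S_2. Then either (1) the partition S_1 ∪ S_2 is an equitable partition of G, or (2) there exist real scalars μ_1,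 μ_2 and r such that −δ_{i,1} + μ_1 δ_{i,2} = r for all i ∈ S_1 and −δ_{j,2} + μ_2 δ_{j,1} = r for all j ∈ S_2. -/
open scoped Classical

/-- `δ_{i,1}`: the number of neighbours of `i` lying in `S₁ = {0, …, k-1}`. -/
noncomputable def deg1 {n : ℕ} (G : SimpleGraph (Fin n)) (k : ℕ) (i : Fin n) : ℕ :=
  (Finset.univ.filter fun j : Fin n => G.Adj i j ∧ (j : ℕ) < k).card

/-- `δ_{i,2}`: the number of neighbours of `i` lying in `S₂ = {k, …, n-1}`. -/
noncomputable def deg2 {n : ℕ} (G : SimpleGraph (Fin n)) (k : ℕ) (i : Fin n) : ℕ :=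
  (Finset.univ.filter fun j : Fin n => G.Adj i j ∧ k ≤ (j : ℕ)).card

/-!
Phases are read modulo `2π`, so that the velocities are continuous functions on a compact torus;
hence they are bounded, the phases are Lipschitz, and the velocities are uniformly continuous in
time. By Barbalat's lemma, synchronised oscillators have asymptotically equal velocities. Let `S` be
one of the two parts and `ψ` the phase difference between a vertex outside `S` and one in `S`.
Passing to the limit along times at which `ψ` tends to an angle `φ`, the velocity of each vertex
becomes the value of the coupling field at the configuration equal to `0` on `S` and to `φ` off `S`,
so this value is constant on each part. If `ψ` is bounded, then `φ` may be chosen along times at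
which `ψ'` tends to `0`, so the constants on the two parts agree: these are the linear relations. If
`ψ` is unbounded, it sweeps through all angles, and constancy for all `φ` separates the
contributions of the two parts: the partition is equitable.
-/

open Filter Topology Set Bornology
open Real (Angle)

section RealAnalysis

theorem norm_image_sub_sub_smul_le_of_norm_deriv_sub_le {E : Type*} [NormedAddCommGroup E]
    [NormedSpace ℝ E] {g f : ℝ → E} {s : Set ℝ} {c : E} {C x y : ℝ} (hs : Convex ℝ s)
    (hg : ∀ t ∈ s, HasDerivWithinAt g (f t) s t) (hC : ∀ t ∈ s, ‖f t - c‖ ≤ C)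
    (hx : x ∈ s) (hy : y ∈ s) : ‖g y - g x - (y - x) • c‖ ≤ C * ‖y - x‖ := by
  have hderiv : ∀ t ∈ s, HasDerivWithinAt (fun t => g t - t • c) (f t - c) s t := fun t ht => by
    simpa only [one_smul, id] using (hg t ht).fun_sub ((hasDerivWithinAt_id t s).smul_const c)
  convert hs.norm_image_sub_le_of_norm_hasDerivWithin_le hderiv hC hx hy using 2
  module

theorem tendsto_deriv_zero_of_uniformContinuousOn {E : Type*} [NormedAddCommGroup E]
    [NormedSpace ℝ E] {g f : ℝ → E} {a : ℝ} {L : E}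
    (hg : ∀ t ∈ Ici a, HasDerivWithinAt g (f t) (Ici a) t) (hf : UniformContinuousOn f (Ici a))
    (hL : Tendsto g atTop (𝓝 L)) : Tendsto f atTop (𝓝 0) := by
  rw [Metric.tendsto_nhds]
  intro ε hε
  obtain ⟨δ, hδ, hfδ⟩ := Metric.uniformContinuousOn_iff.mp hf (ε / 2) (half_pos hε)
  have linear_approx : ∀ t ∈ Ici a, ‖g (t + δ / 2) - g t - (δ / 2) • f t‖ ≤ ε / 2 * (δ / 2) := by
    intro t ht
    have hsub : Icc t (t + δ / 2) ⊆ Ici a := fun s hs => mem_Ici.mpr (le_trans ht hs.1)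
    have hbound : ∀ s ∈ Icc t (t + δ / 2), ‖f s - f t‖ ≤ ε / 2 := fun s hs => by
      rw [← dist_eq_norm]
      refine (hfδ s (hsub hs) t ht ?_).le
      rw [Real.dist_eq, abs_of_nonneg (sub_nonneg.mpr hs.1)]
      linarith [hs.2]
    have := norm_image_sub_sub_smul_le_of_norm_deriv_sub_le (convex_Icc t (t + δ / 2))
      (fun s hs => (hg s (hsub hs)).mono hsub) hbound
      (left_mem_Icc.mpr (by linarith)) (right_mem_Icc.mpr (by linarith))
    rwa [add_sub_cancel_left, Real.norm_of_nonneg (half_pos hδ).le] at this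
  have increment : Tendsto (fun t => g (t + δ / 2) - g t) atTop (𝓝 0) := by
    simpa using (hL.comp (tendsto_atTop_add_const_right _ (δ / 2) tendsto_id)).sub hL
  filter_upwards [Metric.tendsto_nhds.mp increment (ε / 2 * (δ / 2)) (by positivity),
    eventually_ge_atTop a] with t ht hat
  rw [dist_zero_right] at ht ⊢
  refine lt_of_mul_lt_mul_left ?_ (half_pos hδ).le
  calc δ / 2 * ‖f t‖ = ‖(δ / 2) • f t‖ := by
        rw [norm_smul, Real.norm_of_nonneg (half_pos hδ).le]
    _ ≤ ‖g (t + δ / 2) - g t‖ + ‖g (t + δ / 2) - g t - (δ / 2) • f t‖ := norm_le_insert _ _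
    _ < ε / 2 * (δ / 2) + ε / 2 * (δ / 2) := add_lt_add_of_lt_of_le ht (linear_approx t hat)
    _ = δ / 2 * ε := by ring

theorem mapClusterPt_zero_deriv_of_isBounded {g f : ℝ → ℝ} {a : ℝ}
    (hg : ∀ t ∈ Ici a, HasDerivWithinAt g (f t) (Ici a) t) (hb : IsBounded (g '' Ici a)) :
    MapClusterPt 0 atTop f := by
  obtain ⟨M, hM⟩ := Metric.isBounded_iff.mp hb
  simp only [Metric.nhds_basis_ball.mapClusterPt_iff_frequently, frequently_atTop]
  intro ε hε T
  set b := max T a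
  have hba : a ≤ b := le_max_right T a
  obtain ⟨h, hh⟩ := exists_gt (max 0 (M / ε))
  have hpos : 0 < h := (le_max_left _ _).trans_lt hh
  have hMh : M < ε * h := (div_lt_iff₀' hε).mp ((le_max_right _ _).trans_lt hh)
  obtain ⟨c, hc, hslope⟩ := exists_hasDerivAt_eq_slope g f (lt_add_of_pos_right b hpos)
    (fun t ht => (hg t (hba.trans ht.1)).continuousWithinAt.mono fun s hs => hba.trans hs.1)
    (fun t ht => (hg t (hba.trans ht.1.le)).hasDerivAt (Ici_mem_nhds (hba.trans_lt ht.1)))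
  refine ⟨c, (le_max_left T a).trans hc.1.le, ?_⟩
  have hdist := hM (mem_image_of_mem g (hba.trans (lt_add_of_pos_right b hpos).le))
    (mem_image_of_mem g hba)
  rw [mem_ball_zero_iff, hslope, add_sub_cancel_left, norm_div, Real.norm_of_nonneg hpos.le,
    div_lt_iff₀ hpos]
  exact hdist.trans_lt hMh

end RealAnalysis

section Angle

instance compactSpace_angle : CompactSpace Angle :=
  haveI : Fact (0 < 2 * Real.pi) := ⟨Real.two_pi_pos⟩
  inferInstanceAs (CompactSpace (AddCircle (2 * Real.pi)))

theorem uniformContinuous_angle_coe : UniformContinuous ((↑) : ℝ → Angle) :=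
  uniformContinuous_addMonoidHom_of_continuous (f := Real.Angle.coeHom) Real.Angle.continuous_coe

theorem exists_mem_angle_coe_eq_of_not_isBounded {s : Set ℝ} (hs : s.OrdConnected)
    (hb : ¬IsBounded s) (φ : Angle) : ∃ x ∈ s, (x : Angle) = φ := by
  induction φ using Real.Angle.induction_on with | _ y
  obtain ⟨z, hz⟩ : s.Nonempty := nonempty_iff_ne_empty.mpr fun h => hb (h ▸ isBounded_empty)
  rw [isBounded_iff_bddBelow_bddAbove, not_and_or] at hb
  rcases hb with hbelow | habove
  · set x := toIcoMod Real.two_pi_pos (z - 2 * Real.pi) y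
    have hxz : x < z :=
      (toIcoMod_lt_right Real.two_pi_pos (z - 2 * Real.pi) y).trans_eq (sub_add_cancel _ _)
    obtain ⟨w, hw, hwx⟩ := not_bddBelow_iff.mp hbelow x
    exact ⟨x, hs.out hw hz ⟨hwx.le, hxz.le⟩, Real.Angle.coe_toIcoMod _ _⟩
  · set x := toIcoMod Real.two_pi_pos z y
    have hzx : z ≤ x := left_le_toIcoMod Real.two_pi_pos z y
    obtain ⟨w, hw, hxw⟩ := not_bddAbove_iff.mp habove x
    exact ⟨x, hs.out hz hw ⟨hzx, hxw.le⟩, Real.Angle.coe_toIcoMod _ _⟩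

theorem mapClusterPt_angle_of_not_isBounded {ψ : ℝ → ℝ} {a : ℝ} (hc : ContinuousOn ψ (Ici a))
    (hb : ¬IsBounded (ψ '' Ici a)) (φ : Angle) :
    MapClusterPt φ atTop fun t => (ψ t : Angle) := by
  suffices h : ∃ᶠ t in atTop, (ψ t : Angle) = φ from
    mapClusterPt_iff_frequently.mpr fun _ hs => h.mono fun _ ht => ht ▸ mem_of_mem_nhds hs
  refine frequently_atTop.mpr fun T => ?_
  set b := max T a
  have hba : a ≤ b := le_max_right T a
  have hsub : Ici b ⊆ Ici a := Ici_subset_Ici.mpr hba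
  have htail : ¬IsBounded (ψ '' Ici b) := fun h => hb <| by
    rw [← Icc_union_Ici_eq_Ici hba, image_union]
    exact (isCompact_Icc.image_of_continuousOn (hc.mono Icc_subset_Ici_self)).isBounded.union h
  obtain ⟨_, ⟨t, ht, rfl⟩, htφ⟩ := exists_mem_angle_coe_eq_of_not_isBounded
    (isPreconnected_Ici.image ψ (hc.mono hsub)).ordConnected htail φ
  exact ⟨t, (le_max_left T a).trans ht, htφ⟩

end Angle

/-- `θ` is a solution on `[0, ∞)` of the phase equations `θᵢ' = Fᵢ(θ)`, whose vector field `F` sees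
the phases only modulo `2π`. The phases themselves are lifted to `ℝ`. -/
def IsPhaseSolution {V : Type*} (F : (V → Angle) → V → ℝ) (θ : V → ℝ → ℝ) : Prop :=
  ∀ i, ∀ t ∈ Ici (0 : ℝ), HasDerivWithinAt (θ i) (F (fun j => θ j t) i) (Ici 0) t

namespace IsPhaseSolution

variable {V : Type*} {F : (V → Angle) → V → ℝ} {θ : V → ℝ → ℝ}

theorem uniformContinuousOn (hθ : IsPhaseSolution F θ) (hF : Continuous F) (i : V) :
    UniformContinuousOn (θ i) (Ici 0) := by
  obtain ⟨C, hC⟩ := isCompact_univ.exists_bound_of_continuousOn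
    ((continuous_apply i).comp hF).continuousOn
  refine (LipschitzOnWith.of_dist_le' (K := C) fun s hs t ht => ?_).uniformContinuousOn
  rw [dist_eq_norm, dist_eq_norm]
  exact (convex_Ici 0).norm_image_sub_le_of_norm_hasDerivWithin_le (hθ i)
    (fun r _ => hC _ (mem_univ _)) ht hs

theorem uniformContinuousOn_comp {Y : Type*} [UniformSpace Y] (hθ : IsPhaseSolution F θ)
    (hF : Continuous F) {Φ : (V → Angle) → Y} (hΦ : Continuous Φ) :
    UniformContinuousOn (fun t => Φ fun j => θ j t) (Ici 0) := by
  have hphase : UniformContinuousOn (fun t j => (θ j t : Angle)) (Ici 0) := by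
    refine uniformContinuousOn_iff_restrict.mpr (uniformContinuous_pi.mpr fun j => ?_)
    exact uniformContinuousOn_iff_restrict.mp
      (uniformContinuous_angle_coe.comp_uniformContinuousOn (hθ.uniformContinuousOn hF j))
  exact (CompactSpace.uniformContinuous_of_continuous hΦ).comp_uniformContinuousOn hphase

theorem tendsto_velocity_sub (hθ : IsPhaseSolution F θ) (hF : Continuous F) {i j : V}
    (hij : Tendsto (fun t => θ i t - θ j t) atTop (𝓝 0)) :
    Tendsto (fun t => F (fun l => θ l t) i - F (fun l => θ l t) j) atTop (𝓝 0) :=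
  tendsto_deriv_zero_of_uniformContinuousOn (fun t ht => (hθ i t ht).sub (hθ j t ht))
    (hθ.uniformContinuousOn_comp hF
      (((continuous_apply i).comp hF).sub ((continuous_apply j).comp hF))) hij

end IsPhaseSolution

section Coupling

variable {V : Type*}

/-- The total weight of the edges from `i` into `S`; for an adjacency matrix, the number of
neighbours of `i` in `S`. -/
noncomputable def weightInto (A : Matrix V V ℝ) (S : Finset V) (i : V) : ℝ :=
  ∑ j ∈ S, A i j

/-- The phase configuration equal to `0` on `S` and to `φ` off `S`: up to a common rotation, the
limit configurations of phases that synchronise within `S` and within its complement. -/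
noncomputable def blockPhase [DecidableEq V] (S : Finset V) (φ : Angle) : V → Angle :=
  S.piecewise 0 fun _ => φ

variable [Fintype V]

/-- The vector field of phase oscillators with coupling weights `A` and coupling function `h`.
The frustrated Kuramoto model has `h x = sin (x - α)` and the adjacency matrix as `A`. -/
noncomputable def couplingField (A : Matrix V V ℝ) (h : Angle → ℝ) (x : V → Angle) (i : V) : ℝ :=
  ∑ j, A i j * h (x j - x i)

theorem continuous_couplingField (A : Matrix V V ℝ) {h : Angle → ℝ} (hh : Continuous h) :
    Continuous (couplingField A h) := by
  unfold couplingField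
  fun_prop

theorem couplingField_sub_const (A : Matrix V V ℝ) (h : Angle → ℝ) (x : V → Angle) (c : Angle) :
    couplingField A h (fun j => x j - c) = couplingField A h x := by
  funext i
  simp only [couplingField, sub_sub_sub_cancel_right]

variable [DecidableEq V]

theorem couplingField_blockPhase_of_mem (A : Matrix V V ℝ) (h : Angle → ℝ) {S : Finset V}
    (φ : Angle) {i : V} (hi : i ∈ S) :
    couplingField A h (blockPhase S φ) i = weightInto A S i * h 0 + weightInto A Sᶜ i * h φ := by
  rw [couplingField, ← Finset.sum_add_sum_compl S, weightInto, weightInto, Finset.sum_mul,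
    Finset.sum_mul]
  congr 1 <;> refine Finset.sum_congr rfl fun j hj => ?_
  · simp [blockPhase, hi, hj]
  · simp [blockPhase, hi, Finset.mem_compl.mp hj]

theorem couplingField_blockPhase_of_notMem (A : Matrix V V ℝ) (h : Angle → ℝ) {S : Finset V}
    (φ : Angle) {i : V} (hi : i ∉ S) :
    couplingField A h (blockPhase S φ) i =
      weightInto A Sᶜ i * h 0 + weightInto A S i * h (-φ) := by
  rw [couplingField, ← Finset.sum_compl_add_sum S, weightInto, weightInto, Finset.sum_mul,
    Finset.sum_mul]
  congr 1 <;> refine Finset.sum_congr rfl fun j hj => ?_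
  · simp [blockPhase, hi, Finset.mem_compl.mp hj]
  · simp [blockPhase, hi, hj]

end Coupling

/-- The phases `θ` synchronise asymptotically within `S` and within its complement. -/
def IsBlockSynchronized {V : Type*} (S : Finset V) (θ : V → ℝ → ℝ) : Prop :=
  ∀ i j, (i ∈ S ↔ j ∈ S) → Tendsto (fun t => θ i t - θ j t) atTop (𝓝 0)

namespace IsBlockSynchronized

variable {V : Type*} [DecidableEq V] {S : Finset V} {θ : V → ℝ → ℝ} {φ : Angle} {p q : V}

theorem tendsto_blockPhase (hsync : IsBlockSynchronized S θ) (hp : p ∈ S) (hq : q ∉ S)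
    {l : Filter ℝ} (hl : l ≤ atTop)
    (hφ : Tendsto (fun t => ((θ q t - θ p t : ℝ) : Angle)) l (𝓝 φ)) :
    Tendsto (fun t j => (θ j t : Angle) - θ p t) l (𝓝 (blockPhase S φ)) := by
  have hcoe : ∀ i j, (i ∈ S ↔ j ∈ S) →
      Tendsto (fun t => ((θ i t - θ j t : ℝ) : Angle)) l (𝓝 0) := fun i j hij =>
    (Real.Angle.continuous_coe.tendsto' 0 0 Real.Angle.coe_zero).comp ((hsync i j hij).mono_left hl)
  refine tendsto_pi_nhds.mpr fun j => ?_
  by_cases hj : j ∈ S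
  · simpa [blockPhase, hj] using hcoe j p (iff_of_true hj hp)
  · simpa [blockPhase, hj] using (hcoe j q (iff_of_false hj hq)).add hφ

variable [Fintype V] {A : Matrix V V ℝ} {h : Angle → ℝ}

theorem tendsto_couplingField (hsync : IsBlockSynchronized S θ) (hh : Continuous h)
    (hp : p ∈ S) (hq : q ∉ S) {l : Filter ℝ} (hl : l ≤ atTop)
    (hφ : Tendsto (fun t => ((θ q t - θ p t : ℝ) : Angle)) l (𝓝 φ)) (i : V) :
    Tendsto (fun t => couplingField A h (fun j => θ j t) i) l
      (𝓝 (couplingField A h (blockPhase S φ) i)) := by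
  have hlim := (((continuous_apply i).comp (continuous_couplingField A hh)).tendsto _).comp
    (hsync.tendsto_blockPhase hp hq hl hφ)
  simpa only [Function.comp_def, couplingField_sub_const] using hlim

theorem couplingField_blockPhase_eq (hsync : IsBlockSynchronized S θ) (hh : Continuous h)
    (hθ : IsPhaseSolution (couplingField A h) θ) (hp : p ∈ S) (hq : q ∉ S)
    (hφ : MapClusterPt φ atTop fun t => ((θ q t - θ p t : ℝ) : Angle)) {i j : V}
    (hij : i ∈ S ↔ j ∈ S) :
    couplingField A h (blockPhase S φ) i = couplingField A h (blockPhase S φ) j := by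
  obtain ⟨U, hU, hUφ⟩ := mapClusterPt_iff_ultrafilter.mp hφ
  have hlim := hsync.tendsto_couplingField (A := A) hh hp hq hU hUφ
  have hzero := hθ.tendsto_velocity_sub (continuous_couplingField A hh) (hsync i j hij)
  exact sub_eq_zero.mp <| tendsto_nhds_unique ((hlim i).sub (hlim j)) (hzero.mono_left hU)

theorem exists_couplingField_blockPhase_eq_const (hsync : IsBlockSynchronized S θ)
    (hh : Continuous h) (hθ : IsPhaseSolution (couplingField A h) θ) (hp : p ∈ S) (hq : q ∉ S)
    (hb : IsBounded ((fun t => θ q t - θ p t) '' Ici 0)) :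
    ∃ (φ : Angle) (c : ℝ), ∀ i, couplingField A h (blockPhase S φ) i = c := by
  obtain ⟨U, hU, hUderiv⟩ := mapClusterPt_iff_ultrafilter.mp <|
    mapClusterPt_zero_deriv_of_isBounded (fun t ht => (hθ q t ht).fun_sub (hθ p t ht)) hb
  obtain ⟨φ, -, hUφ⟩ := isCompact_univ.ultrafilter_le_nhds
    (U.map fun t => ((θ q t - θ p t : ℝ) : Angle)) (by simp)
  have hlim := hsync.tendsto_couplingField (A := A) hh hp hq hU hUφ
  have hcluster := mapClusterPt_iff_ultrafilter.mpr ⟨U, hU, hUφ⟩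
  have hpq : couplingField A h (blockPhase S φ) q = couplingField A h (blockPhase S φ) p :=
    sub_eq_zero.mp <| tendsto_nhds_unique ((hlim q).sub (hlim p)) hUderiv
  refine ⟨φ, couplingField A h (blockPhase S φ) p, fun i => ?_⟩
  by_cases hi : i ∈ S
  · exact hsync.couplingField_blockPhase_eq hh hθ hp hq hcluster (iff_of_true hi hp)
  · exact (hsync.couplingField_blockPhase_eq hh hθ hp hq hcluster (iff_of_false hi hq)).trans hpq

end IsBlockSynchronized

section Algebra

theorem eq_and_eq_of_forall_mul_add_mul_eq {X R : Type*} [CommRing R] [IsDomain R]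
    {h : X → R} {x y : X} (hx : h x ≠ 0) (hxy : h y ≠ h x) {a b a' b' : R}
    (heq : ∀ z, a * h x + b * h z = a' * h x + b' * h z) : a = a' ∧ b = b' := by
  have hb : b = b' := by
    refine mul_right_cancel₀ (sub_ne_zero.mpr hxy) ?_
    linear_combination heq y - heq x
  subst hb
  exact ⟨mul_right_cancel₀ hx (add_right_cancel (heq x)), rfl⟩

variable {V : Type*} [Fintype V] [DecidableEq V] {A : Matrix V V ℝ} {h : Angle → ℝ} {S : Finset V}

theorem weightInto_eq_of_forall_couplingField_blockPhase_eq (h0 : h 0 ≠ 0) {γ : Angle}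
    (hγ : h γ ≠ h 0) {u v : V} (huv : u ∈ S ↔ v ∈ S)
    (heq : ∀ φ, couplingField A h (blockPhase S φ) u = couplingField A h (blockPhase S φ) v) :
    weightInto A S u = weightInto A S v ∧ weightInto A Sᶜ u = weightInto A Sᶜ v := by
  by_cases hu : u ∈ S
  · refine eq_and_eq_of_forall_mul_add_mul_eq h0 hγ fun φ => ?_
    simpa only [couplingField_blockPhase_of_mem A h φ hu,
      couplingField_blockPhase_of_mem A h φ (huv.mp hu)] using heq φ
  · refine (eq_and_eq_of_forall_mul_add_mul_eq h0 hγ fun φ => ?_).symm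
    simpa only [couplingField_blockPhase_of_notMem A h _ hu,
      couplingField_blockPhase_of_notMem A h _ (huv.not.mp hu), neg_neg] using heq (-φ)

theorem exists_weightInto_relations_of_couplingField_blockPhase_eq_const (h0 : h 0 ≠ 0) {φ : Angle}
    {c : ℝ} (hc : ∀ i, couplingField A h (blockPhase S φ) i = c) :
    ∃ μ₁ μ₂ r : ℝ, (∀ i ∈ S, -weightInto A S i + μ₁ * weightInto A Sᶜ i = r) ∧
      ∀ j ∉ S, -weightInto A Sᶜ j + μ₂ * weightInto A S j = r := by
  refine ⟨-h φ / h 0, -h (-φ) / h 0, -c / h 0, fun i hi => ?_, fun j hj => ?_⟩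
  · rw [← hc i, couplingField_blockPhase_of_mem A h φ hi]
    field_simp
    ring
  · rw [← hc j, couplingField_blockPhase_of_notMem A h φ hj]
    field_simp
    ring

end Algebra

theorem kuramoto_bipartition_general {V : Type*} [Fintype V] [DecidableEq V] {A : Matrix V V ℝ}
    {h : Angle → ℝ} (hh : Continuous h) (h0 : h 0 ≠ 0) {γ : Angle} (hγ : h γ ≠ h 0)
    {θ : V → ℝ → ℝ} (hθ : IsPhaseSolution (couplingField A h) θ) {S : Finset V}
    (hsync : IsBlockSynchronized S θ) {p q : V} (hp : p ∈ S) (hq : q ∉ S) :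
    (∀ u v, (u ∈ S ↔ v ∈ S) →
      weightInto A S u = weightInto A S v ∧ weightInto A Sᶜ u = weightInto A Sᶜ v) ∨
    ∃ μ₁ μ₂ r : ℝ, (∀ i ∈ S, -weightInto A S i + μ₁ * weightInto A Sᶜ i = r) ∧
      ∀ j ∉ S, -weightInto A Sᶜ j + μ₂ * weightInto A S j = r := by
  by_cases hb : IsBounded ((fun t => θ q t - θ p t) '' Ici 0)
  · obtain ⟨φ, c, hc⟩ := hsync.exists_couplingField_blockPhase_eq_const hh hθ hp hq hb
    exact .inr (exists_weightInto_relations_of_couplingField_blockPhase_eq_const h0 hc)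
  · have hF := continuous_couplingField A hh
    have hcont := (hθ.uniformContinuousOn hF q).continuousOn.sub
      (hθ.uniformContinuousOn hF p).continuousOn
    refine .inl fun u v huv => weightInto_eq_of_forall_couplingField_blockPhase_eq h0 hγ huv
      fun φ => ?_
    exact hsync.couplingField_blockPhase_eq hh hθ hp hq
      (mapClusterPt_angle_of_not_isBounded hcont hb φ) huv

section Kuramoto

variable {n : ℕ} {G : SimpleGraph (Fin n)} {α : ℝ} {θ : Fin n → ℝ → ℝ}

theorem IsKuramotoSol.isPhaseSolution (hθ : IsKuramotoSol G α θ) :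
    IsPhaseSolution (couplingField (G.adjMatrix ℝ) fun x => (x - α).sin) θ := by
  intro i t ht
  convert hθ i t ht using 1
  simp only [couplingField, kuramotoDeriv, SimpleGraph.adjMatrix_apply, ite_mul, one_mul, zero_mul,
    ← Real.Angle.coe_sub, Real.Angle.sin_coe]

theorem isBlockSynchronized_filter_lt {k : ℕ}
    (h1 : ∀ i j : Fin n, (i : ℕ) < k → (j : ℕ) < k →
      Tendsto (fun t => θ i t - θ j t) atTop (𝓝 0))
    (h2 : ∀ p q : Fin n, k ≤ (p : ℕ) → k ≤ (q : ℕ) →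
      Tendsto (fun t => θ p t - θ q t) atTop (𝓝 0)) :
    IsBlockSynchronized (Finset.univ.filter fun j : Fin n => (j : ℕ) < k) θ := by
  intro i j hij
  simp only [Finset.mem_filter_univ] at hij
  rcases lt_or_ge (i : ℕ) k with hi | hi
  · exact h1 i j hi (hij.mp hi)
  · exact h2 i j hi (not_lt.mp (hij.not.mp hi.not_gt))

theorem weightInto_adjMatrix_filter_lt (k : ℕ) (i : Fin n) :
    weightInto (G.adjMatrix ℝ) (Finset.univ.filter fun j : Fin n => (j : ℕ) < k) i =
      deg1 G k i := by
  simp [weightInto, deg1, SimpleGraph.adjMatrix_apply, Finset.filter_filter, and_comm]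

theorem weightInto_adjMatrix_compl_filter_lt (k : ℕ) (i : Fin n) :
    weightInto (G.adjMatrix ℝ) (Finset.univ.filter fun j : Fin n => (j : ℕ) < k)ᶜ i =
      deg2 G k i := by
  simp [weightInto, deg2, SimpleGraph.adjMatrix_apply, Finset.compl_filter, Finset.filter_filter,
    and_comm]

end Kuramoto

/-- **Theorem (α-Kuramoto bipartitions).** Suppose `θ` solves the frustrated Kuramoto
model, the phases synchronise asymptotically within each of `S₁ = {0,…,k-1}` and
`S₂ = {k,…,n-1}`, but not between the two parts. Then either the bipartition is
equitable, or there are scalars `μ₁, μ₂, r` with `-δ_{i,1} + μ₁ δ_{i,2} = r` for all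
`i ∈ S₁` and `-δ_{j,2} + μ₂ δ_{j,1} = r` for all `j ∈ S₂`. -/
theorem kuramoto_bipartition {n : ℕ} (G : SimpleGraph (Fin n)) (hconn : G.Connected)
    (k : ℕ) (hk1 : 1 ≤ k) (hk2 : k ≤ n - 1)
    (α : ℝ) (hα : α ∈ Set.Ioo 0 (Real.pi / 2))
    (θ : Fin n → ℝ → ℝ) (hθ : IsKuramotoSol G α θ)
    (h1 : ∀ i j : Fin n, (i : ℕ) < k → (j : ℕ) < k →
      Filter.Tendsto (fun t => θ i t - θ j t) Filter.atTop (nhds 0))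
    (h2 : ∀ p q : Fin n, k ≤ (p : ℕ) → k ≤ (q : ℕ) →
      Filter.Tendsto (fun t => θ p t - θ q t) Filter.atTop (nhds 0))
    (h3 : ∃ i p : Fin n, (i : ℕ) < k ∧ k ≤ (p : ℕ) ∧
      ¬ Filter.Tendsto (fun t => θ i t - θ p t) Filter.atTop (nhds 0)) :
    (∀ u v : Fin n, (((u : ℕ) < k ∧ (v : ℕ) < k) ∨ (k ≤ (u : ℕ) ∧ k ≤ (v : ℕ))) →
        deg1 G k u = deg1 G k v ∧ deg2 G k u = deg2 G k v) ∨
    (∃ μ₁ μ₂ r : ℝ,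
      (∀ i : Fin n, (i : ℕ) < k → -(deg1 G k i : ℝ) + μ₁ * (deg2 G k i : ℝ) = r) ∧
      (∀ j : Fin n, k ≤ (j : ℕ) → -(deg2 G k j : ℝ) + μ₂ * (deg1 G k j : ℝ) = r)) := by
  have hsin : Real.sin α ≠ 0 :=
    (Real.sin_pos_of_pos_of_lt_pi hα.1 (hα.2.trans (half_lt_self Real.pi_pos))).ne'
  obtain ⟨p, q, hp, hq, -⟩ := h3
  have hdichotomy := kuramoto_bipartition_general (h := fun x => (x - α).sin) (γ := α) (p := p)
    (q := q) (Real.Angle.continuous_sin.comp (continuous_sub_right _)) (by simpa using hsin)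
    (by simpa [eq_comm] using hsin) hθ.isPhaseSolution (isBlockSynchronized_filter_lt h1 h2)
    (by simpa using hp) (by simpa using hq)
  simpa only [weightInto_adjMatrix_filter_lt, weightInto_adjMatrix_compl_filter_lt, Nat.cast_inj,
    Finset.mem_filter_univ, not_lt, iff_iff_and_or_not_and_not] using hdichotomy
end

section
/- Under the hypotheses of the bipartition theorem (G connected on n vertices, S_1 = {1,…,k}, S_2 = {k+1,…,n}, α ∈ (0,π/2), θ a solution of the frustrated Kuramoto model with θ_i − θ_j → 0 within each part and θ_i − θ_p not converging to 0 across the two parts), let λ_1(t) = (1/k) Σ_{i∈S_1} θ_i(t) and λ_2(t) = (1/(n−k)) Σ_{j∈S_2} θ_j(t). If λ_1(t) − λ_2(t) does NOT converge to any constant as t → ∞, then the partition S_1 ∪ S_2 is an equitable partition of G, i.e. δ_{p,1} = δ_{q,1} and δ_{p,2} = δ_{q,2} for all p, q ∈ S_1, and likewise for all pairs in S_2. -/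
open scoped Classical

/-- The average phase `λ₁(t)` of the vertices in `S₁ = {0, …, k-1}`. -/
noncomputable def avg1 {n : ℕ} (k : ℕ) (θ : Fin n → ℝ → ℝ) (t : ℝ) : ℝ :=
  (∑ i ∈ Finset.univ.filter fun i : Fin n => (i : ℕ) < k, θ i t) / (k : ℝ)

/-- The average phase `λ₂(t)` of the vertices in `S₂ = {k, …, n-1}`. -/
noncomputable def avg2 {n : ℕ} (k : ℕ) (θ : Fin n → ℝ → ℝ) (t : ℝ) : ℝ :=
  (∑ j ∈ Finset.univ.filter fun j : Fin n => k ≤ (j : ℕ), θ j t) / ((n - k : ℕ) : ℝ)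

/-!
Put `z = λ₁ - λ₂ + α`. Inside each part the phases agree asymptotically with their mean, so for
`u ∈ S₁` the velocity of `u` is, up to `o(1)`, equal to `-(δ_{u,1} sin α + δ_{u,2} sin z)`. If `u`
and `v` both lie in `S₁`, then `θ_u - θ_v → 0`, and since the velocities are uniformly continuous
Barbalat's lemma makes the difference of the velocities tend to `0` as well. Hence
`(δ_{u,1} - δ_{v,1}) sin α + (δ_{u,2} - δ_{v,2}) sin z → 0`. If `δ_{u,2} ≠ δ_{v,2}`, then `sin z`
converges, and so does the continuous function `z`, because `sin` is periodic and constant on no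
interval; this is excluded. So `δ_{u,2} = δ_{v,2}`, and then `δ_{u,1} = δ_{v,1}` because
`sin α ≠ 0`. The part `S₂` is treated in the same way.
-/

open Filter Topology
open scoped BigOperators

section Asymptotics

theorem isBounded_of_ordConnected_of_forall_add_zsmul_notMem {I : Set ℝ}
    (hI : I.OrdConnected) {s p : ℝ} (hp : 0 < p) (havoid : ∀ m : ℤ, s + m • p ∉ I) :
    Bornology.IsBounded I := by
  rcases I.eq_empty_or_nonempty with rfl | ⟨x, hx⟩
  · exact Bornology.isBounded_empty
  obtain ⟨m, ⟨hle, hlt⟩, -⟩ := existsUnique_add_zsmul_mem_Ico hp s x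
  have hprev : s + (m - 1) • p < x := by
    rw [sub_zsmul, one_zsmul]
    linarith
  refine (Metric.isBounded_Icc (s + (m - 1) • p) (s + m • p)).subset fun z hz ↦ ⟨?_, ?_⟩
  · exact le_of_not_gt fun h ↦ havoid (m - 1) (hI.out hz hx ⟨h.le, hprev.le⟩)
  · exact le_of_not_gt fun h ↦ havoid m (hI.out hx hz ⟨hle, h.le⟩)

theorem isBounded_image_Ici_of_periodic_of_forall_ne {Z : Type*} {f : ℝ → Z} {p : ℝ}
    (hf : Function.Periodic f p) (hp : 0 < p) {y : ℝ → ℝ} {T : ℝ}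
    (hy : ContinuousOn y (Set.Ici T)) {s : ℝ} (hne : ∀ t ≥ T, f (y t) ≠ f s) :
    Bornology.IsBounded (y '' Set.Ici T) := by
  have hconn : IsPreconnected (y '' Set.Ici T) := isPreconnected_Ici.image y hy
  refine isBounded_of_ordConnected_of_forall_add_zsmul_notMem (s := s) hconn.ordConnected hp ?_
  rintro m ⟨t, ht, hyt⟩
  exact hne t ht (by rw [hyt, hf.zsmul m s])

theorem frequently_eq_of_frequently_lt_of_frequently_gt {y : ℝ → ℝ} {T : ℝ}
    (hy : ContinuousOn y (Set.Ici T)) {v : ℝ} (hlt : ∃ᶠ t in atTop, y t < v)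
    (hgt : ∃ᶠ t in atTop, v < y t) : ∃ᶠ t in atTop, y t = v := by
  refine frequently_atTop.2 fun t₀ ↦ ?_
  obtain ⟨t₁, ht₁, hlow⟩ := frequently_atTop.1 hlt (max t₀ T)
  obtain ⟨t₂, ht₂, hhigh⟩ := frequently_atTop.1 hgt t₁
  have hcont : ContinuousOn y (Set.Icc t₁ t₂) :=
    hy.mono fun t ht ↦ (le_max_right t₀ T).trans (ht₁.trans ht.1)
  obtain ⟨t, ht, hyt⟩ := intermediate_value_Icc ht₂ hcont ⟨hlow.le, hhigh.le⟩
  exact ⟨t, (le_max_left t₀ T).trans (ht₁.trans ht.1), hyt⟩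

theorem eq_of_tendsto_comp_of_frequently_eq {X Y Z : Type*} [TopologicalSpace Z] [T1Space Z]
    {l : Filter X} {y : X → Y} {f : Y → Z} {c : Z} {v : Y}
    (h : Tendsto (f ∘ y) l (𝓝 c)) (hv : ∃ᶠ t in l, y t = v) : f v = c := by
  by_contra hne
  obtain ⟨t, hyt, hft⟩ := (hv.and_eventually (h.eventually_ne (Ne.symm hne))).exists
  exact hft (congrArg f hyt)

theorem exists_tendsto_of_tendsto_periodic_comp {Z : Type*} [TopologicalSpace Z] [T1Space Z]
    {f : ℝ → Z} {p : ℝ} (hf : Function.Periodic f p) (hp : 0 < p) {c : Z}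
    (hc : interior (f ⁻¹' {c}) = ∅) {y : ℝ → ℝ} {T : ℝ} (hy : ContinuousOn y (Set.Ici T))
    (h : Tendsto (f ∘ y) atTop (𝓝 c)) : ∃ l, Tendsto y atTop (𝓝 l) := by
  obtain ⟨s, hs⟩ : ∃ s, f s ≠ c := by
    by_contra! hconst
    simp [Set.preimage, hconst] at hc
  obtain ⟨T', hT', hne⟩ : ∃ T' ≥ T, ∀ t ≥ T', f (y t) ≠ f s := by
    obtain ⟨T₀, hT₀⟩ := eventually_atTop.1 (h.eventually_ne hs.symm)
    exact ⟨max T₀ T, le_max_right _ _, fun t ht ↦ hT₀ t ((le_max_left _ _).trans ht)⟩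
  have hbounded : Bornology.IsBounded (y '' Set.Ici T') :=
    isBounded_image_Ici_of_periodic_of_forall_ne hf hp (hy.mono (Set.Ici_subset_Ici.2 hT')) hne
  have hmem : ∀ᶠ t in atTop, y t ∈ y '' Set.Ici T' :=
    (eventually_ge_atTop T').mono fun t ht ↦ Set.mem_image_of_mem y ht
  obtain ⟨M, hM⟩ := hbounded.bddAbove
  obtain ⟨m, hm⟩ := hbounded.bddBelow
  refine tendsto_of_no_upcrossings dense_univ ?_ ⟨M, hmem.mono fun t ht ↦ hM ht⟩
    ⟨m, hmem.mono fun t ht ↦ hm ht⟩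
  rintro a - b - hab ⟨hbelow, habove⟩
  have hlevel : Set.Ioo a b ⊆ f ⁻¹' {c} := fun v hv ↦
    eq_of_tendsto_comp_of_frequently_eq h <| frequently_eq_of_frequently_lt_of_frequently_gt hy
      (hbelow.mono fun t ht ↦ ht.trans hv.1) (habove.mono fun t ht ↦ hv.2.trans ht)
  have hempty : Set.Ioo a b ⊆ ∅ := hc ▸ interior_maximal hlevel isOpen_Ioo
  exact (Set.nonempty_Ioo.2 hab).ne_empty (Set.subset_empty_iff.1 hempty)

theorem interior_sin_preimage_singleton (c : ℝ) : interior (Real.sin ⁻¹' {c}) = ∅ := by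
  by_contra hne
  obtain ⟨x, hx⟩ := Set.nonempty_iff_ne_empty.2 hne
  have hconst : Set.EqOn Real.sin (fun _ ↦ c) Set.univ :=
    Real.analyticOnNhd_sin.eqOn_of_preconnected_of_eventuallyEq analyticOnNhd_const
      isPreconnected_univ (Set.mem_univ x) (mem_interior_iff_mem_nhds.1 hx)
  have h0 := hconst (Set.mem_univ 0)
  have h1 := hconst (Set.mem_univ (Real.pi / 2))
  simp only [Real.sin_zero, Real.sin_pi_div_two] at h0 h1
  exact zero_ne_one (h0.trans h1.symm)

theorem eq_zero_and_eq_zero_of_tendsto_add_mul_sin {z : ℝ → ℝ} {T : ℝ}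
    (hz : ContinuousOn z (Set.Ici T)) (hdiv : ¬ ∃ c, Tendsto z atTop (𝓝 c)) {p q : ℝ}
    (h : Tendsto (fun t ↦ p + q * Real.sin (z t)) atTop (𝓝 0)) : p = 0 ∧ q = 0 := by
  have hq : q = 0 := by
    by_contra hq
    have hsin : Tendsto (Real.sin ∘ z) atTop (𝓝 ((0 - p) / q)) := by
      refine ((h.sub_const p).div_const q).congr fun t ↦ ?_
      rw [add_sub_cancel_left, mul_div_cancel_left₀ _ hq, Function.comp_apply]
    exact hdiv (exists_tendsto_of_tendsto_periodic_comp Real.sin_periodic Real.two_pi_pos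
      (interior_sin_preimage_singleton _) hz hsin)
  subst hq
  simp only [zero_mul, add_zero] at h
  exact ⟨tendsto_nhds_unique tendsto_const_nhds h, rfl⟩

theorem tendsto_deriv_zero_of_uniformContinuousOn_s5 {E : Type*} [NormedAddCommGroup E]
    [NormedSpace ℝ E] {g g' : ℝ → E} {T : ℝ} {c : E}
    (hg : ∀ t ∈ Set.Ici T, HasDerivWithinAt g (g' t) (Set.Ici T) t)
    (hg' : UniformContinuousOn g' (Set.Ici T)) (hlim : Tendsto g atTop (𝓝 c)) :
    Tendsto g' atTop (𝓝 0) := by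
  refine Metric.tendsto_nhds.2 fun ε hε ↦ ?_
  obtain ⟨δ, hδ, hclose⟩ := Metric.uniformContinuousOn_iff_le.1 hg' (ε / 2) (half_pos hε)
  have hincr : Tendsto (fun t ↦ g (t + δ) - g t) atTop (𝓝 0) := by
    simpa using (hlim.comp (tendsto_atTop_add_const_right atTop δ tendsto_id)).sub hlim
  filter_upwards [Metric.tendsto_nhds.1 hincr (δ * (ε / 2)) (by positivity),
    eventually_ge_atTop T] with t hsmall ht
  rw [dist_zero_right] at hsmall ⊢
  have hsub : Set.Icc t (t + δ) ⊆ Set.Ici T := fun s hs ↦ ht.trans hs.1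
  have hlinear : ‖(g (t + δ) - (t + δ) • g' t) - (g t - t • g' t)‖ ≤ ε / 2 * ‖t + δ - t‖ := by
    refine (convex_Icc t (t + δ)).norm_image_sub_le_of_norm_hasDerivWithin_le
      (f := fun s ↦ g s - s • g' t) (f' := fun s ↦ g' s - g' t) (fun s hs ↦ ?_) (fun s hs ↦ ?_)
      (Set.left_mem_Icc.2 (by linarith)) (Set.right_mem_Icc.2 (by linarith))
    · have hline := (hasDerivWithinAt_id s (Set.Icc t (t + δ))).smul_const (g' t)
      rw [one_smul] at hline
      exact ((hg s (hsub hs)).mono hsub).sub hline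
    · rw [← dist_eq_norm]
      refine hclose s (hsub hs) t ht ?_
      rw [Real.dist_eq, abs_of_nonneg] <;> linarith [hs.1, hs.2]
  have hscaled : δ * ‖g' t‖ < δ * ε := by
    calc δ * ‖g' t‖ = ‖δ • g' t‖ := by rw [norm_smul, Real.norm_of_nonneg hδ.le]
      _ = ‖(g (t + δ) - g t) -
            ((g (t + δ) - (t + δ) • g' t) - (g t - t • g' t))‖ := by congr 1; module
      _ ≤ ‖g (t + δ) - g t‖ + ε / 2 * ‖t + δ - t‖ := (norm_sub_le _ _).trans (by gcongr)
      _ < δ * (ε / 2) + ε / 2 * δ := by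
          rw [add_sub_cancel_left, Real.norm_of_nonneg hδ.le]; gcongr
      _ = δ * ε := by ring
  exact lt_of_mul_lt_mul_left hscaled hδ.le

theorem uniformContinuous_finset_sum {ι X E : Type*} [UniformSpace X] [UniformSpace E]
    [AddCommGroup E] [IsUniformAddGroup E] {S : Finset ι} {f : ι → X → E}
    (hf : ∀ i ∈ S, UniformContinuous (f i)) : UniformContinuous fun x ↦ ∑ i ∈ S, f i x := by
  rw [← Finset.sum_fn]
  exact Finset.sum_induction f UniformContinuous (fun _ _ ↦ .add) uniformContinuous_const hf

theorem tendsto_comp_sub_comp_of_uniformContinuous {X E F : Type*}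
    [UniformSpace E] [AddGroup E] [IsUniformAddGroup E]
    [UniformSpace F] [AddGroup F] [IsUniformAddGroup F]
    {f : E → F} (hf : UniformContinuous f) {l : Filter X} {x y : X → E}
    (h : Tendsto (fun t ↦ x t - y t) l (𝓝 0)) :
    Tendsto (fun t ↦ f (x t) - f (y t)) l (𝓝 0) := by
  have hunif : Tendsto (fun t ↦ (y t, x t)) l (uniformity E) := by
    rw [uniformity_eq_comap_nhds_zero, tendsto_comap_iff]
    exact h
  have himage := Tendsto.comp hf hunif
  rw [uniformity_eq_comap_nhds_zero, tendsto_comap_iff] at himage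
  exact himage

end Asymptotics

section AsymptoticPhase

variable {ι : Type*} {θ : ι → ℝ → ℝ}

/-- The function `x` is an asymptotic common phase of the oscillators in `S`: every phase `θ i`
with `i ∈ S` approaches `x` as `t → ∞`. -/
def IsAsymptoticPhase (θ : ι → ℝ → ℝ) (S : Set ι) (x : ℝ → ℝ) : Prop :=
  ∀ i ∈ S, Tendsto (fun t ↦ θ i t - x t) atTop (𝓝 0)

theorem IsAsymptoticPhase.tendsto_sub {S : Set ι} {x : ℝ → ℝ} (hx : IsAsymptoticPhase θ S x)
    {u v : ι} (hu : u ∈ S) (hv : v ∈ S) : Tendsto (fun t ↦ θ u t - θ v t) atTop (𝓝 0) := by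
  simpa using (hx u hu).sub (hx v hv)

theorem isAsymptoticPhase_expect {S : Finset ι}
    (h : ∀ i ∈ S, ∀ j ∈ S, Tendsto (fun t ↦ θ i t - θ j t) atTop (𝓝 0)) :
    IsAsymptoticPhase θ S (fun t ↦ 𝔼 j ∈ S, θ j t) := by
  intro i hi
  have hmean : Tendsto (fun t ↦ 𝔼 j ∈ S, (θ i t - θ j t)) atTop (𝓝 0) := by
    simpa [Finset.expect_eq_sum_div_card] using
      (tendsto_finsetSum S fun j hj ↦ h i hi j hj).div_const (S.card : ℝ)
  refine hmean.congr fun t ↦ ?_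
  rw [Finset.expect_sub_distrib, Finset.expect_const ⟨i, hi⟩]

end AsymptoticPhase

section Averages

variable {n k : ℕ} {θ : Fin n → ℝ → ℝ}

theorem avg1_eq_expect (hk : k ≤ n) (θ : Fin n → ℝ → ℝ) :
    avg1 k θ = fun t ↦ 𝔼 i with Fin.val i < k, θ i t := by
  ext t
  rw [avg1, Finset.expect_eq_sum_div_card, Fin.card_filter_val_lt, min_eq_right hk]

theorem avg2_eq_expect (θ : Fin n → ℝ → ℝ) :
    avg2 k θ = fun t ↦ 𝔼 i with k ≤ Fin.val i, θ i t := by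
  have hcard : (Finset.univ.filter fun i : Fin n ↦ k ≤ (i : ℕ)).card = n - k := by
    have hsplit := Finset.card_filter_add_card_filter_not (s := (Finset.univ : Finset (Fin n)))
      fun i ↦ (i : ℕ) < k
    simp only [not_lt, Fin.card_filter_val_lt, Finset.card_univ, Fintype.card_fin] at hsplit
    lia
  ext t
  rw [avg2, Finset.expect_eq_sum_div_card, hcard]

theorem isAsymptoticPhase_avg1 (hk : k ≤ n)
    (h : ∀ i j : Fin n, (i : ℕ) < k → (j : ℕ) < k →
      Tendsto (fun t ↦ θ i t - θ j t) atTop (𝓝 0)) :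
    IsAsymptoticPhase θ {i : Fin n | (i : ℕ) < k} (avg1 k θ) := by
  rw [avg1_eq_expect hk]
  have hmean := isAsymptoticPhase_expect (S := Finset.univ.filter fun i : Fin n ↦ (i : ℕ) < k)
    fun i hi j hj ↦ h i j (Finset.mem_filter_univ i |>.1 hi) (Finset.mem_filter_univ j |>.1 hj)
  rwa [Finset.coe_filter_univ] at hmean

theorem isAsymptoticPhase_avg2
    (h : ∀ i j : Fin n, k ≤ (i : ℕ) → k ≤ (j : ℕ) →
      Tendsto (fun t ↦ θ i t - θ j t) atTop (𝓝 0)) :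
    IsAsymptoticPhase θ {i : Fin n | (i : ℕ) < k}ᶜ (avg2 k θ) := by
  rw [avg2_eq_expect]
  have hmean := isAsymptoticPhase_expect (S := Finset.univ.filter fun i : Fin n ↦ k ≤ (i : ℕ))
    fun i hi j hj ↦ h i j (Finset.mem_filter_univ i |>.1 hi) (Finset.mem_filter_univ j |>.1 hj)
  simpa only [Finset.coe_filter_univ, Set.compl_ofPred, not_lt] using hmean

theorem continuousOn_avg1 {s : Set ℝ} (hθ : ∀ i, ContinuousOn (θ i) s) :
    ContinuousOn (avg1 k θ) s :=
  (continuousOn_finsetSum _ fun i _ ↦ hθ i).div_const _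

theorem continuousOn_avg2 {s : Set ℝ} (hθ : ∀ i, ContinuousOn (θ i) s) :
    ContinuousOn (avg2 k θ) s :=
  (continuousOn_finsetSum _ fun i _ ↦ hθ i).div_const _

end Averages

section Kuramoto

variable {n : ℕ} {G : SimpleGraph (Fin n)} {α : ℝ} {θ φ : Fin n → ℝ → ℝ}

/-- The number of neighbours of the vertex `i` lying in `S`, written `δ_{i,1}` and `δ_{i,2}` when
`S` is one of the two parts. -/
noncomputable def degreeIn (G : SimpleGraph (Fin n)) (S : Set (Fin n)) (i : Fin n) : ℕ :=
  (Finset.univ.filter fun j : Fin n ↦ G.Adj i j ∧ j ∈ S).card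

theorem deg1_eq_degreeIn (G : SimpleGraph (Fin n)) (k : ℕ) :
    deg1 G k = degreeIn G {j | (j : ℕ) < k} := by
  ext i
  simp only [deg1, degreeIn, Set.mem_ofPred_eq]

theorem deg2_eq_degreeIn_compl (G : SimpleGraph (Fin n)) (k : ℕ) :
    deg2 G k = degreeIn G {j | (j : ℕ) < k}ᶜ := by
  ext i
  simp only [deg2, degreeIn, Set.mem_compl_iff, Set.mem_ofPred_eq, not_lt]

theorem abs_kuramotoDeriv_le (i : Fin n) (t : ℝ) : |kuramotoDeriv G α θ i t| ≤ n := by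
  calc |kuramotoDeriv G α θ i t|
      ≤ ∑ j : Fin n, |if G.Adj i j then Real.sin (θ j t - θ i t - α) else 0| :=
        Finset.abs_sum_le_sum_abs _ _
    _ ≤ ∑ _j : Fin n, (1 : ℝ) := by
        gcongr with j
        split_ifs
        · exact Real.abs_sin_le_one _
        · simp
    _ = n := by simp

theorem uniformContinuousOn_kuramotoDeriv (G : SimpleGraph (Fin n)) (α : ℝ) {s : Set ℝ}
    (hθ : ∀ i, UniformContinuousOn (θ i) s) (i : Fin n) :
    UniformContinuousOn (kuramotoDeriv G α θ i) s := by
  simp only [uniformContinuousOn_iff_restrict] at hθ ⊢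
  change UniformContinuous fun t : s ↦
    ∑ j, if G.Adj i j then Real.sin (θ j t - θ i t - α) else 0
  refine uniformContinuous_finset_sum fun j _ ↦ ?_
  split_ifs
  · exact Real.lipschitzWith_sin.uniformContinuous.comp
      (((hθ j).sub (hθ i)).sub uniformContinuous_const)
  · exact uniformContinuous_const

theorem tendsto_kuramotoDeriv_sub_kuramotoDeriv (G : SimpleGraph (Fin n)) (α : ℝ)
    {l : Filter ℝ} (h : ∀ i, Tendsto (fun t ↦ θ i t - φ i t) l (𝓝 0)) (i : Fin n) :
    Tendsto (fun t ↦ kuramotoDeriv G α θ i t - kuramotoDeriv G α φ i t) l (𝓝 0) := by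
  simp only [kuramotoDeriv, ← Finset.sum_sub_distrib]
  rw [← Finset.sum_const_zero (s := (Finset.univ : Finset (Fin n)))]
  refine tendsto_finsetSum _ fun j _ ↦ ?_
  split_ifs with hadj
  · refine tendsto_comp_sub_comp_of_uniformContinuous Real.lipschitzWith_sin.uniformContinuous ?_
    simpa only [sub_sub_sub_cancel_right, sub_sub_sub_comm, sub_zero] using (h j).sub (h i)
  · simpa only [sub_self] using tendsto_const_nhds

theorem kuramotoDeriv_ite {S : Set (Fin n)} (x y : ℝ → ℝ) {u : Fin n} (hu : u ∈ S) (t : ℝ) :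
    kuramotoDeriv G α (fun i ↦ if i ∈ S then x else y) u t =
      -(degreeIn G S u * Real.sin α + degreeIn G Sᶜ u * Real.sin (x t - y t + α)) := by
  have hterm : ∀ j, (if G.Adj u j then
        Real.sin ((if j ∈ S then x else y) t - (if u ∈ S then x else y) t - α) else 0) =
      -((if G.Adj u j ∧ j ∈ S then Real.sin α else 0) +
        (if G.Adj u j ∧ j ∈ Sᶜ then Real.sin (x t - y t + α) else 0)) := by
    intro j
    have hsin : Real.sin (y t - x t - α) = -Real.sin (x t - y t + α) := by
      rw [← Real.sin_neg]
      ring_nf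
    by_cases hadj : G.Adj u j <;> by_cases hj : j ∈ S <;> simp [hadj, hj, hu, hsin]
  simp only [kuramotoDeriv, hterm, degreeIn, Finset.sum_neg_distrib, Finset.sum_add_distrib,
    ← Finset.sum_filter, Finset.sum_const, nsmul_eq_mul, Set.mem_compl_iff]

theorem tendsto_kuramotoDeriv_add_degreeIn_mul (G : SimpleGraph (Fin n)) (α : ℝ)
    {S : Set (Fin n)} {x y : ℝ → ℝ} (hx : IsAsymptoticPhase θ S x)
    (hy : IsAsymptoticPhase θ Sᶜ y) {u : Fin n} (hu : u ∈ S) :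
    Tendsto (fun t ↦ kuramotoDeriv G α θ u t +
      (degreeIn G S u * Real.sin α + degreeIn G Sᶜ u * Real.sin (x t - y t + α)))
      atTop (𝓝 0) := by
  have hphase : ∀ i, Tendsto (fun t ↦ θ i t - (if i ∈ S then x else y) t) atTop (𝓝 0) := by
    intro i
    split_ifs with hi
    · exact hx i hi
    · exact hy i hi
  refine (tendsto_kuramotoDeriv_sub_kuramotoDeriv G α hphase u).congr fun t ↦ ?_
  rw [kuramotoDeriv_ite x y hu, sub_neg_eq_add]

namespace IsKuramotoSol

theorem uniformContinuousOn (hθ : IsKuramotoSol G α θ) (i : Fin n) :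
    UniformContinuousOn (θ i) (Set.Ici 0) := by
  refine ((convex_Ici (0 : ℝ)).lipschitzOnWith_of_nnnorm_hasDerivWithin_le (C := n)
    (hθ i) fun t _ ↦ ?_).uniformContinuousOn
  rw [← NNReal.coe_le_coe]
  simpa using abs_kuramotoDeriv_le i t

theorem tendsto_kuramotoDeriv_sub (hθ : IsKuramotoSol G α θ) {u v : Fin n} {c : ℝ}
    (h : Tendsto (fun t ↦ θ u t - θ v t) atTop (𝓝 c)) :
    Tendsto (fun t ↦ kuramotoDeriv G α θ u t - kuramotoDeriv G α θ v t) atTop (𝓝 0) := by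
  have hunif : UniformContinuousOn
      (fun t ↦ kuramotoDeriv G α θ u t - kuramotoDeriv G α θ v t) (Set.Ici 0) := by
    have hderiv := uniformContinuousOn_kuramotoDeriv G α hθ.uniformContinuousOn
    simp only [uniformContinuousOn_iff_restrict] at hderiv ⊢
    exact (hderiv u).sub (hderiv v)
  exact tendsto_deriv_zero_of_uniformContinuousOn_s5
    (fun t ht ↦ (hθ u t ht).sub (hθ v t ht)) hunif h

theorem degreeIn_eq_and_degreeIn_compl_eq (hθ : IsKuramotoSol G α θ) (hα : Real.sin α ≠ 0)
    {S : Set (Fin n)} {x y : ℝ → ℝ} (hx : IsAsymptoticPhase θ S x)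
    (hy : IsAsymptoticPhase θ Sᶜ y) {T : ℝ} (hxy : ContinuousOn (fun t ↦ x t - y t) (Set.Ici T))
    (hdiv : ¬ ∃ c, Tendsto (fun t ↦ x t - y t) atTop (𝓝 c)) {u v : Fin n}
    (hu : u ∈ S) (hv : v ∈ S) :
    degreeIn G S u = degreeIn G S v ∧ degreeIn G Sᶜ u = degreeIn G Sᶜ v := by
  have hcont : ContinuousOn (fun t ↦ x t - y t + α) (Set.Ici T) := hxy.add continuousOn_const
  have hdiv' : ¬ ∃ c, Tendsto (fun t ↦ x t - y t + α) atTop (𝓝 c) := fun ⟨c, hc⟩ ↦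
    hdiv ⟨c - α, by simpa only [add_sub_cancel_right] using hc.sub_const α⟩
  have hlim : Tendsto (fun t ↦ ((degreeIn G S u : ℝ) - degreeIn G S v) * Real.sin α +
      ((degreeIn G Sᶜ u : ℝ) - degreeIn G Sᶜ v) * Real.sin (x t - y t + α)) atTop (𝓝 0) := by
    have hvel := ((tendsto_kuramotoDeriv_add_degreeIn_mul G α hx hy hu).sub
      (tendsto_kuramotoDeriv_add_degreeIn_mul G α hx hy hv)).sub
      (hθ.tendsto_kuramotoDeriv_sub (hx.tendsto_sub hu hv))
    rw [sub_zero, sub_zero] at hvel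
    exact hvel.congr fun t ↦ by ring
  obtain ⟨hS, hSc⟩ := eq_zero_and_eq_zero_of_tendsto_add_mul_sin hcont hdiv' hlim
  have hS' := (mul_eq_zero.1 hS).resolve_right hα
  exact ⟨by exact_mod_cast sub_eq_zero.1 hS', by exact_mod_cast sub_eq_zero.1 hSc⟩

end IsKuramotoSol

end Kuramoto

theorem kuramoto_bipartition_nonconvergent_general {n : ℕ} (G : SimpleGraph (Fin n))
    (k : ℕ) (hk : k ≤ n) (α : ℝ) (hα : Real.sin α ≠ 0)
    (θ : Fin n → ℝ → ℝ) (hθ : IsKuramotoSol G α θ)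
    (h1 : ∀ i j : Fin n, (i : ℕ) < k → (j : ℕ) < k →
      Tendsto (fun t ↦ θ i t - θ j t) atTop (𝓝 0))
    (h2 : ∀ p q : Fin n, k ≤ (p : ℕ) → k ≤ (q : ℕ) →
      Tendsto (fun t ↦ θ p t - θ q t) atTop (𝓝 0))
    (hdiv : ¬ ∃ c : ℝ, Tendsto (fun t ↦ avg1 k θ t - avg2 k θ t) atTop (𝓝 c)) :
    ∀ u v : Fin n, (((u : ℕ) < k ∧ (v : ℕ) < k) ∨ (k ≤ (u : ℕ) ∧ k ≤ (v : ℕ))) →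
      deg1 G k u = deg1 G k v ∧ deg2 G k u = deg2 G k v := by
  have hx : IsAsymptoticPhase θ {i : Fin n | (i : ℕ) < k} (avg1 k θ) :=
    isAsymptoticPhase_avg1 hk h1
  have hy : IsAsymptoticPhase θ {i : Fin n | (i : ℕ) < k}ᶜ (avg2 k θ) :=
    isAsymptoticPhase_avg2 h2
  have hcont₁ : ContinuousOn (avg1 k θ) (Set.Ici 0) :=
    continuousOn_avg1 fun i ↦ (hθ.uniformContinuousOn i).continuousOn
  have hcont₂ : ContinuousOn (avg2 k θ) (Set.Ici 0) :=
    continuousOn_avg2 fun i ↦ (hθ.uniformContinuousOn i).continuousOn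
  rw [deg1_eq_degreeIn, deg2_eq_degreeIn_compl]
  rintro u v (⟨hu, hv⟩ | ⟨hu, hv⟩)
  · exact hθ.degreeIn_eq_and_degreeIn_compl_eq hα hx hy (hcont₁.sub hcont₂) hdiv hu hv
  · have hdiv' : ¬ ∃ c, Tendsto (fun t ↦ avg2 k θ t - avg1 k θ t) atTop (𝓝 c) := fun ⟨c, hc⟩ ↦
      hdiv ⟨-c, by simpa only [neg_sub] using hc.neg⟩
    rw [← compl_compl {i : Fin n | (i : ℕ) < k}] at hx
    have hdeg := hθ.degreeIn_eq_and_degreeIn_compl_eq hα hy hx (hcont₂.sub hcont₁) hdiv'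
      (Set.notMem_ofPred_iff.2 hu.not_gt) (Set.notMem_ofPred_iff.2 hv.not_gt)
    rw [compl_compl] at hdeg
    exact hdeg.symm

/-- **Theorem (first branch of the bipartition theorem).** Under the hypotheses of the
bipartition theorem, if `λ₁(t) - λ₂(t)` does not converge to any constant as `t → ∞`,
then the bipartition `S₁ ∪ S₂` is equitable. -/
theorem kuramoto_bipartition_nonconvergent {n : ℕ} (G : SimpleGraph (Fin n))
    (hconn : G.Connected) (k : ℕ) (hk1 : 1 ≤ k) (hk2 : k ≤ n - 1)
    (α : ℝ) (hα : α ∈ Set.Ioo 0 (Real.pi / 2))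
    (θ : Fin n → ℝ → ℝ) (hθ : IsKuramotoSol G α θ)
    (h1 : ∀ i j : Fin n, (i : ℕ) < k → (j : ℕ) < k →
      Filter.Tendsto (fun t => θ i t - θ j t) Filter.atTop (nhds 0))
    (h2 : ∀ p q : Fin n, k ≤ (p : ℕ) → k ≤ (q : ℕ) →
      Filter.Tendsto (fun t => θ p t - θ q t) Filter.atTop (nhds 0))
    (h3 : ∃ i p : Fin n, (i : ℕ) < k ∧ k ≤ (p : ℕ) ∧
      ¬ Filter.Tendsto (fun t => θ i t - θ p t) Filter.atTop (nhds 0))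
    (hdiv : ¬ ∃ c : ℝ,
      Filter.Tendsto (fun t => avg1 k θ t - avg2 k θ t) Filter.atTop (nhds c)) :
    ∀ u v : Fin n, (((u : ℕ) < k ∧ (v : ℕ) < k) ∨ (k ≤ (u : ℕ) ∧ k ≤ (v : ℕ))) →
      deg1 G k u = deg1 G k v ∧ deg2 G k u = deg2 G k v := by
  have hsin : Real.sin α ≠ 0 :=
    (Real.sin_pos_of_pos_of_lt_pi hα.1 (hα.2.trans (half_lt_self Real.pi_pos))).ne'
  exact kuramoto_bipartition_nonconvergent_general G k (hk2.trans n.pred_le) α hsin θ hθ h1 h2 hdiv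
end

section
/- Let α ∈ (0, π/2) and β ∈ ℝ be such that sin(α+β) > 0, and set μ_1 = sin(β)/sin(α) and μ_2 = −sin(2α+β)/sin(α). Then |μ_1 + μ_2| < 2, μ_1 > μ_2, and α = arctan( √(4 − (μ_1+μ_2)²) / (μ_1 − μ_2) ). -/
/-!
With `γ = α + β`, sum-to-product gives `μ₁ + μ₂ = -2 cos γ` and `μ₁ - μ₂ = 2 sin γ / tan α`.
Since `sin γ > 0`, the square root is `2 sin γ`, and its quotient by `μ₁ - μ₂` is `tan α`.
-/

section

open Real

variable {α γ : ℝ}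

theorem sin_div_sin_sub_sin_two_mul_add_div_sin (hα : sin α ≠ 0) (β : ℝ) :
    sin β / sin α - sin (2 * α + β) / sin α = -2 * cos (α + β) := by
  have sin_sub_eq : sin β - sin (2 * α + β) = -2 * cos (α + β) * sin α := by
    rw [sin_sub_sin, show (β - (2 * α + β)) / 2 = -α by ring,
      show (β + (2 * α + β)) / 2 = α + β by ring, sin_neg]
    ring
  rw [← sub_div, sin_sub_eq, mul_div_cancel_right₀ _ hα]

theorem sin_div_sin_add_sin_two_mul_add_div_sin (α β : ℝ) :
    sin β / sin α + sin (2 * α + β) / sin α = 2 * sin (α + β) / tan α := by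
  have sin_add_eq : sin β + sin (2 * α + β) = 2 * sin (α + β) * cos α := by
    rw [two_mul_sin_mul_cos]
    ring_nf
  rw [← add_div, sin_add_eq, tan_eq_sin_div_cos, div_div_eq_mul_div]

theorem abs_cos_lt_one_of_sin_ne_zero (hγ : sin γ ≠ 0) : |cos γ| < 1 :=
  (abs_cos_le_one γ).lt_of_ne fun h ↦ hγ (sin_eq_zero_iff_cos_eq.2 (eq_or_eq_neg_of_abs_eq h))

theorem sqrt_four_sub_two_mul_cos_sq (γ : ℝ) : √(4 - (2 * cos γ) ^ 2) = 2 * |sin γ| := by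
  have sq_eq : 4 - (2 * cos γ) ^ 2 = (2 * sin γ) ^ 2 := by
    linear_combination -4 * sin_sq_add_cos_sq γ
  rw [sq_eq, sqrt_sq_eq_abs, abs_mul, abs_two]

theorem arctan_sqrt_four_sub_two_mul_cos_sq_div (hα : α ∈ Set.Ioo (-(π / 2)) (π / 2))
    (hγ : 0 < sin γ) :
    arctan (√(4 - (2 * cos γ) ^ 2) / (2 * sin γ / tan α)) = α := by
  rw [sqrt_four_sub_two_mul_cos_sq, abs_of_pos hγ, div_div_cancel₀ (by positivity),
    arctan_tan hα.1 hα.2]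

end

/-- **Remark (recovering α from μ₁, μ₂).** For `α ∈ (0, π/2)` and `β ∈ ℝ` with
`sin(α + β) > 0`, setting `μ₁ = sin β / sin α` and `μ₂ = -sin(2α + β) / sin α`,
one has `|μ₁ + μ₂| < 2`, `μ₁ > μ₂`, and
`α = arctan(√(4 - (μ₁ + μ₂)²) / (μ₁ - μ₂))`. -/
theorem alpha_from_mu (α β : ℝ) (hα : α ∈ Set.Ioo 0 (Real.pi / 2))
    (hβ : Real.sin (α + β) > 0)
    (μ₁ μ₂ : ℝ) (hμ₁ : μ₁ = Real.sin β / Real.sin α)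
    (hμ₂ : μ₂ = -Real.sin (2 * α + β) / Real.sin α) :
    |μ₁ + μ₂| < 2 ∧ μ₁ > μ₂ ∧
    α = Real.arctan (Real.sqrt (4 - (μ₁ + μ₂) ^ 2) / (μ₁ - μ₂)) := by
  have sin_α_pos : 0 < Real.sin α :=
    Real.sin_pos_of_pos_of_lt_pi hα.1 (hα.2.trans (half_lt_self Real.pi_pos))
  have tan_α_pos : 0 < Real.tan α := Real.tan_pos_of_pos_of_lt_pi_div_two hα.1 hα.2
  have sum_eq : μ₁ + μ₂ = -2 * Real.cos (α + β) := by
    rw [hμ₁, hμ₂, neg_div, ← sub_eq_add_neg,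
      sin_div_sin_sub_sin_two_mul_add_div_sin sin_α_pos.ne']
  have diff_eq : μ₁ - μ₂ = 2 * Real.sin (α + β) / Real.tan α := by
    rw [hμ₁, hμ₂, neg_div, sub_neg_eq_add, sin_div_sin_add_sin_two_mul_add_div_sin]
  refine ⟨?_, ?_, ?_⟩
  · rw [sum_eq, abs_mul, abs_neg, abs_two]
    linarith [abs_cos_lt_one_of_sin_ne_zero hβ.ne']
  · have diff_pos : 0 < μ₁ - μ₂ := diff_eq ▸ by positivity
    exact sub_pos.1 diff_pos
  · rw [sum_eq, diff_eq, neg_mul, neg_sq,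
      arctan_sqrt_four_sub_two_mul_cos_sq_div ⟨by linarith [hα.1, hα.2], hα.2⟩ hβ]
end

section
/- Let G be a connected finite simple graph on n vertices with a bipartition S_1 ∪ S_2 of its vertex set, and suppose there exist scalars μ_1, μ_2, r with |μ_1 + μ_2| < 2 and μ_1 > μ_2 such that −δ_{i,1} + μ_1 δ_{i,2} = r for all i ∈ S_1 and −δ_{j,2} + μ_2 δ_{j,1} = r for all j ∈ S_2. Let α = arctan( √(4 − (μ_1+μ_2)²) / (μ_1 − μ_2) ) and β = arccos(−(μ_1+μ_2)/2) − α. Then for any scalar c, the functions θ_i(t) = c + r sin(α) t for i ∈ S_1 and θ_j(t) = c + r sin(α) t + α + β for j ∈ S_2 form a solution of the frustrated Kuramoto model on G with parameter α. In particular, if in addition S_1 ∪ S_2 is not an equitable partition, then S_1 ∪ S_2 is an α-Kuramoto bipartition of G for this value of α. -/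
open scoped Classical

/-- The number of neighbours of `i` lying in the vertex set `S`. -/
noncomputable def degIn {n : ℕ} (G : SimpleGraph (Fin n)) (S : Finset (Fin n))
    (i : Fin n) : ℕ :=
  (S.filter fun j => G.Adj i j).card

/-- The bipartition `S ∪ Sᶜ` is equitable. -/
def IsEquitableBip {n : ℕ} (G : SimpleGraph (Fin n)) (S : Finset (Fin n)) : Prop :=
  ∀ u v : Fin n, (u ∈ S ↔ v ∈ S) →
    degIn G S u = degIn G S v ∧ degIn G Sᶜ u = degIn G Sᶜ v

/-- The bipartition `S ∪ Sᶜ` is an `α`-Kuramoto bipartition: there is a solution of the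
frustrated Kuramoto model whose phases agree on `[0, ∞)` exactly within the parts. -/
def IsAlphaKuramotoBip {n : ℕ} (G : SimpleGraph (Fin n)) (α : ℝ)
    (S : Finset (Fin n)) : Prop :=
  ∃ θ : Fin n → ℝ → ℝ, IsKuramotoSol G α θ ∧
    (∀ i j : Fin n, (i ∈ S ↔ j ∈ S) → Set.EqOn (θ i) (θ j) (Set.Ici 0)) ∧
    (∀ i j : Fin n, i ∈ S → j ∉ S → ¬ Set.EqOn (θ i) (θ j) (Set.Ici 0))

/-!
Let the two parts rotate rigidly with a common frequency `ω`, the second part ahead of the first by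
a constant phase `φ`. Each vertex then sees only two distinct sine values, so the model reduces to
`-δ_{i,1} sin α + δ_{i,2} sin (φ - α) = ω` on the first part and
`-δ_{j,2} sin α + δ_{j,1} sin (-φ - α) = ω` on the second. With `ω = r sin α` these are the degree
conditions as soon as `sin (φ - α) = μ₁ sin α` and `sin (-φ - α) = μ₂ sin α`. Adding and subtracting
the last two equations gives `2 cos φ = -(μ₁ + μ₂)` and `2 sin φ cos α = (μ₁ - μ₂) sin α`, whose
solution is the `arccos` for `φ = α + β` and the `arctan` for `α`.
-/

section Trigonometry

open Real

theorem two_mul_sin_arccos_neg_div_two (s : ℝ) : 2 * sin (arccos (-s / 2)) = √(4 - s ^ 2) := by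
  have hscale : 4 - s ^ 2 = 2 ^ 2 * (1 - (-s / 2) ^ 2) := by ring
  rw [sin_arccos, hscale, sqrt_mul (by positivity), sqrt_sq zero_le_two]

theorem mul_sin_arctan_div {d : ℝ} (hd : d ≠ 0) (x : ℝ) :
    d * sin (arctan (x / d)) = x * cos (arctan (x / d)) := by
  rw [← tan_mul_cos (cos_arctan_pos _).ne', tan_arctan, ← mul_assoc, mul_div_cancel₀ x hd]

theorem sin_sub_eq_mul_sin {α φ μ₁ μ₂ : ℝ} (hcos : 2 * cos φ = -(μ₁ + μ₂))
    (hsin : 2 * sin φ * cos α = (μ₁ - μ₂) * sin α) : sin (φ - α) = μ₁ * sin α := by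
  rw [sin_sub]
  linear_combination hsin / 2 - sin α * hcos / 2

theorem sin_neg_sub_eq_mul_sin {α φ μ₁ μ₂ : ℝ} (hcos : 2 * cos φ = -(μ₁ + μ₂))
    (hsin : 2 * sin φ * cos α = (μ₁ - μ₂) * sin α) : sin (-φ - α) = μ₂ * sin α := by
  apply sin_sub_eq_mul_sin (μ₂ := μ₁)
  · rw [cos_neg, hcos, add_comm]
  · rw [sin_neg]
    linear_combination -hsin

end Trigonometry

section TwoPhase

variable {n : ℕ} {G : SimpleGraph (Fin n)} {S : Finset (Fin n)} {α φ ω : ℝ}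

/-- The two-cluster rigid rotation: all vertices turn at frequency `ω`, those of `S` from phase `c`
and those outside `S` from phase `c + φ`. It is the ansatz for the explicit solutions. -/
noncomputable def twoPhase (S : Finset (Fin n)) (ω φ c : ℝ) (i : Fin n) (t : ℝ) : ℝ :=
  if i ∈ S then c + ω * t else c + ω * t + φ

theorem twoPhase_of_mem {i : Fin n} (hi : i ∈ S) (ω φ c t : ℝ) :
    twoPhase S ω φ c i t = c + ω * t :=
  if_pos hi

theorem twoPhase_of_notMem {i : Fin n} (hi : i ∉ S) (ω φ c t : ℝ) :
    twoPhase S ω φ c i t = c + ω * t + φ :=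
  if_neg hi

theorem twoPhase_congr {i j : Fin n} (hij : i ∈ S ↔ j ∈ S) (ω φ c : ℝ) :
    twoPhase S ω φ c i = twoPhase S ω φ c j := by
  funext t
  simp only [twoPhase, hij]

theorem hasDerivAt_twoPhase (S : Finset (Fin n)) (ω φ c : ℝ) (i : Fin n) (t : ℝ) :
    HasDerivAt (twoPhase S ω φ c i) ω t := by
  have hrot : HasDerivAt (fun t => c + ω * t) ω t := by
    simpa using ((hasDerivAt_id t).const_mul ω).const_add c
  by_cases hi : i ∈ S
  · exact hrot.congr_of_eventuallyEq (.of_forall (twoPhase_of_mem hi ω φ c))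
  · exact (hrot.add_const φ).congr_of_eventuallyEq (.of_forall (twoPhase_of_notMem hi ω φ c))

theorem kuramotoDeriv_eq_of_two_phases {θ : Fin n → ℝ → ℝ} {t x y : ℝ}
    (hx : ∀ j ∈ S, θ j t = x) (hy : ∀ j ∈ Sᶜ, θ j t = y) (i : Fin n) :
    kuramotoDeriv G α θ i t =
      degIn G S i * Real.sin (x - θ i t - α) + degIn G Sᶜ i * Real.sin (y - θ i t - α) := by
  have sum_over_part {T : Finset (Fin n)} {z : ℝ} (hz : ∀ j ∈ T, θ j t = z) :
      (∑ j ∈ T, if G.Adj i j then Real.sin (θ j t - θ i t - α) else 0) =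
        degIn G T i * Real.sin (z - θ i t - α) := by
    rw [degIn, ← Finset.sum_filter, ← nsmul_eq_mul]
    exact Finset.sum_eq_card_nsmul fun j hj => by rw [hz j (Finset.mem_filter.1 hj).1]
  rw [kuramotoDeriv, ← Finset.sum_add_sum_compl S, sum_over_part hx, sum_over_part hy]

theorem kuramotoDeriv_twoPhase (G : SimpleGraph (Fin n)) (S : Finset (Fin n))
    (α ω φ c : ℝ) (i : Fin n) (t : ℝ) :
    kuramotoDeriv G α (twoPhase S ω φ c) i t =
      degIn G S i * Real.sin (c + ω * t - twoPhase S ω φ c i t - α) +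
        degIn G Sᶜ i * Real.sin (c + ω * t + φ - twoPhase S ω φ c i t - α) :=
  kuramotoDeriv_eq_of_two_phases (fun _ hj => twoPhase_of_mem hj ω φ c t)
    (fun _ hj => twoPhase_of_notMem (Finset.mem_compl.1 hj) ω φ c t) i

theorem isKuramotoSol_twoPhase
    (hS : ∀ i ∈ S, degIn G S i * Real.sin (-α) + degIn G Sᶜ i * Real.sin (φ - α) = ω)
    (hSc : ∀ j ∈ Sᶜ, degIn G S j * Real.sin (-φ - α) + degIn G Sᶜ j * Real.sin (-α) = ω)
    (c : ℝ) : IsKuramotoSol G α (twoPhase S ω φ c) := by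
  intro i t _
  suffices hfreq : kuramotoDeriv G α (twoPhase S ω φ c) i t = ω by
    rw [hfreq]
    exact (hasDerivAt_twoPhase S ω φ c i t).hasDerivWithinAt
  rw [kuramotoDeriv_twoPhase]
  by_cases hi : i ∈ S
  · rw [twoPhase_of_mem hi, sub_self, zero_sub, add_sub_cancel_left]
    exact hS i hi
  · rw [twoPhase_of_notMem hi, sub_self, zero_sub, sub_add_cancel_left]
    exact hSc i (Finset.mem_compl.2 hi)

theorem isAlphaKuramotoBip_of_isKuramotoSol_twoPhase {c : ℝ} (hφ : φ ≠ 0)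
    (hsol : IsKuramotoSol G α (twoPhase S ω φ c)) : IsAlphaKuramotoBip G α S := by
  refine ⟨twoPhase S ω φ c, hsol, fun i j hij t _ => congrFun (twoPhase_congr hij ω φ c) t, ?_⟩
  intro i j hi hj heq
  have hphase := heq Set.self_mem_Ici
  rw [twoPhase_of_mem hi, twoPhase_of_notMem hj, left_eq_add] at hphase
  exact hφ hphase

theorem isKuramotoSol_twoPhase_of_degree_conditions {μ₁ μ₂ r : ℝ}
    (h1 : ∀ i ∈ S, -(degIn G S i : ℝ) + μ₁ * (degIn G Sᶜ i : ℝ) = r)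
    (h2 : ∀ j ∈ Sᶜ, -(degIn G Sᶜ j : ℝ) + μ₂ * (degIn G S j : ℝ) = r)
    (hcos : 2 * Real.cos φ = -(μ₁ + μ₂))
    (hsin : 2 * Real.sin φ * Real.cos α = (μ₁ - μ₂) * Real.sin α) (c : ℝ) :
    IsKuramotoSol G α (twoPhase S (r * Real.sin α) φ c) := by
  refine isKuramotoSol_twoPhase (fun i hi => ?_) (fun j hj => ?_) c
  · rw [sin_sub_eq_mul_sin hcos hsin, Real.sin_neg, ← h1 i hi]
    ring
  · rw [sin_neg_sub_eq_mul_sin hcos hsin, Real.sin_neg, ← h2 j hj]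
    ring

end TwoPhase

theorem condition2_solution_general {n : ℕ} (G : SimpleGraph (Fin n)) (S : Finset (Fin n))
    (μ₁ μ₂ r : ℝ) (hsum : |μ₁ + μ₂| < 2) (hne : μ₁ ≠ μ₂)
    (h1 : ∀ i ∈ S, -(degIn G S i : ℝ) + μ₁ * (degIn G Sᶜ i : ℝ) = r)
    (h2 : ∀ j ∈ Sᶜ, -(degIn G Sᶜ j : ℝ) + μ₂ * (degIn G S j : ℝ) = r)
    (α β : ℝ)
    (hα : α = Real.arctan (Real.sqrt (4 - (μ₁ + μ₂) ^ 2) / (μ₁ - μ₂)))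
    (hβ : β = Real.arccos (-(μ₁ + μ₂) / 2) - α) :
    (∀ c : ℝ, IsKuramotoSol G α (twoPhase S (r * Real.sin α) (α + β) c)) ∧
    IsAlphaKuramotoBip G α S := by
  obtain ⟨hlower, hupper⟩ := abs_lt.1 hsum
  have hφ : α + β = Real.arccos (-(μ₁ + μ₂) / 2) := by rw [hβ, add_sub_cancel]
  have hφ_ne : α + β ≠ 0 := hφ ▸ (Real.arccos_pos.2 (by linarith)).ne'
  have hcos : 2 * Real.cos (α + β) = -(μ₁ + μ₂) := by
    rw [hφ, Real.cos_arccos (by linarith) (by linarith), mul_div_cancel₀ _ two_ne_zero]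
  have hsin : 2 * Real.sin (α + β) * Real.cos α = (μ₁ - μ₂) * Real.sin α := by
    rw [hφ, two_mul_sin_arccos_neg_div_two, hα, mul_sin_arctan_div (sub_ne_zero.2 hne)]
  have hsol := isKuramotoSol_twoPhase_of_degree_conditions h1 h2 hcos hsin
  exact ⟨hsol, isAlphaKuramotoBip_of_isKuramotoSol_twoPhase hφ_ne (hsol 0)⟩

/-- **Theorem (condition 2 gives an explicit solution and an α-Kuramoto bipartition).**
If the bipartition `S ∪ Sᶜ` of a connected graph satisfies
`-δ_{i,1} + μ₁ δ_{i,2} = r` on `S` and `-δ_{j,2} + μ₂ δ_{j,1} = r` on `Sᶜ`, with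
`|μ₁ + μ₂| < 2` and `μ₁ > μ₂`, and `α = arctan(√(4 - (μ₁+μ₂)²)/(μ₁-μ₂))`,
`β = arccos(-(μ₁+μ₂)/2) - α`, then for any `c` the phases
`θᵢ(t) = c + r sin(α) t` (`i ∈ S`) and `θⱼ(t) = c + r sin(α) t + α + β` (`j ∉ S`)
solve the frustrated Kuramoto model; in particular, if the bipartition is not
equitable, it is an `α`-Kuramoto bipartition. -/
theorem condition2_solution {n : ℕ} (G : SimpleGraph (Fin n)) (hconn : G.Connected)
    (S : Finset (Fin n)) (hS : S.Nonempty) (hSc : Sᶜ.Nonempty)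
    (μ₁ μ₂ r : ℝ) (hsum : |μ₁ + μ₂| < 2) (hlt : μ₂ < μ₁)
    (h1 : ∀ i ∈ S, -(degIn G S i : ℝ) + μ₁ * (degIn G Sᶜ i : ℝ) = r)
    (h2 : ∀ j ∈ Sᶜ, -(degIn G Sᶜ j : ℝ) + μ₂ * (degIn G S j : ℝ) = r)
    (α β : ℝ)
    (hα : α = Real.arctan (Real.sqrt (4 - (μ₁ + μ₂) ^ 2) / (μ₁ - μ₂)))
    (hβ : β = Real.arccos (-(μ₁ + μ₂) / 2) - α) :
    (∀ c : ℝ, IsKuramotoSol G α (fun i t =>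
        if i ∈ S then c + r * Real.sin α * t else c + r * Real.sin α * t + α + β)) ∧
    (¬ IsEquitableBip G S → IsAlphaKuramotoBip G α S) := by
  obtain ⟨hsol, hbip⟩ := condition2_solution_general G S μ₁ μ₂ r hsum hlt.ne' h1 h2 α β hα hβ
  exact ⟨fun c => by simp only [add_assoc _ α β]; exact hsol c, fun _ => hbip⟩
end

section
/- There exist a connected finite simple graph G, a parameter α ∈ (0, π/2), and an α-Kuramoto partition of G that is not an orbit partition of G. -/
open scoped Classical

/-- The partition given by the fibres of `P` is an orbit partition: there is a graph
automorphism of `G` whose orbits are exactly the parts. -/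
def IsOrbitPartition {n k : ℕ} (G : SimpleGraph (Fin n)) (P : Fin n → Fin k) : Prop :=
  ∃ π : G ≃g G, ∀ i j : Fin n, P i = P j ↔ ∃ m : ℕ, (⇑π)^[m] i = j

/-!
On a regular graph all oscillators may move in unison at constant speed, so the partition with a
single part is `α`-Kuramoto for every `α`; it is an orbit partition only if the graph is
vertex-transitive. The complement of the disjoint union of two connected regular graphs of equal
degree and different orders is connected and regular, but not vertex-transitive, since its
automorphisms preserve the orders of the connected components of the disjoint union. Here we take
the cycles of lengths 3 and 4.
-/

open SimpleGraph

section Isomorphisms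

variable {V W : Type*} {G : SimpleGraph V} {H : SimpleGraph W}

/-- A graph is vertex-transitive if its automorphism group acts transitively on the vertices.
A failure of this property is what rules out the one-part partition as an orbit partition. -/
def IsVertexTransitive (G : SimpleGraph V) : Prop :=
  ∀ v w : V, ∃ σ : G ≃g G, σ v = w

theorem IsVertexTransitive.of_iso (hG : IsVertexTransitive G) (e : G ≃g H) :
    IsVertexTransitive H := by
  intro v w
  obtain ⟨σ, hσ⟩ := hG (e.symm v) (e.symm w)
  exact ⟨(e.symm.trans σ).trans e, by simp [hσ]⟩

theorem IsVertexTransitive.compl (hG : IsVertexTransitive G) : IsVertexTransitive Gᶜ := by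
  intro v w
  obtain ⟨σ, hσ⟩ := hG v w
  exact ⟨⟨σ.toEquiv, by simp [compl_adj, σ.map_adj_iff]⟩, hσ⟩

theorem isVertexTransitive_compl_iff : IsVertexTransitive Gᶜ ↔ IsVertexTransitive G :=
  ⟨fun h => compl_compl G ▸ h.compl, IsVertexTransitive.compl⟩

theorem IsVertexTransitive.ncard_supp_eq (hG : IsVertexTransitive G)
    (C D : G.ConnectedComponent) : C.supp.ncard = D.supp.ncard := by
  induction C using ConnectedComponent.ind with | _ v
  induction D using ConnectedComponent.ind with | _ w
  obtain ⟨σ, rfl⟩ := hG v w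
  exact Nat.card_congr (ConnectedComponent.isoEquivSupp σ (G.connectedComponentMk v))

theorem isRegularOfDegree_of_iso [G.LocallyFinite] [H.LocallyFinite] {d : ℕ}
    (hG : G.IsRegularOfDegree d) (e : G ≃g H) : H.IsRegularOfDegree d := fun w => by
  rw [← e.symm.degree_eq w, hG]

end Isomorphisms

section DisjointUnion

variable {V W : Type*} {G : SimpleGraph V} {H : SimpleGraph W} {d : ℕ}

theorem supp_connectedComponentMk_sum_inl (hG : G.Preconnected) (v : V) :
    ((G ⊕g H).connectedComponentMk (.inl v)).supp = Set.range Sum.inl := by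
  ext (v' | w)
  · simpa using (hG v' v).map (Embedding.sumInl (H := H)).toHom
  · simpa using fun h => not_reachable_sum_inl_inr v w h.symm

theorem supp_connectedComponentMk_sum_inr (hH : H.Preconnected) (w : W) :
    ((G ⊕g H).connectedComponentMk (.inr w)).supp = Set.range Sum.inr := by
  ext (v | w')
  · simpa using not_reachable_sum_inl_inr v w
  · simpa using (hH w' w).map (Embedding.sumInr (G := G)).toHom

theorem IsVertexTransitive.card_eq_of_sum (h : IsVertexTransitive (G ⊕g H))
    (hG : G.Connected) (hH : H.Connected) : Nat.card V = Nat.card W := by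
  obtain ⟨v⟩ := hG.nonempty
  obtain ⟨w⟩ := hH.nonempty
  have hvw := h.ncard_supp_eq (connectedComponentMk _ (.inl v)) (connectedComponentMk _ (.inr w))
  rwa [supp_connectedComponentMk_sum_inl hG.preconnected,
    supp_connectedComponentMk_sum_inr hH.preconnected,
    Set.ncard_range_of_injective Sum.inl_injective,
    Set.ncard_range_of_injective Sum.inr_injective] at hvw

theorem not_isVertexTransitive_compl_sum (hG : G.Connected) (hH : H.Connected)
    (hcard : Nat.card V ≠ Nat.card W) : ¬ IsVertexTransitive (G ⊕g H)ᶜ := fun h =>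
  hcard ((isVertexTransitive_compl_iff.1 h).card_eq_of_sum hG hH)

theorem connected_compl_sum [Nonempty V] [Nonempty W] : (G ⊕g H)ᶜ.Connected :=
  (connected_or_connected_compl _).resolve_left not_connected_sum

theorem degree_sum_inl (v : V) [Fintype (G.neighborSet v)]
    [Fintype ((G ⊕g H).neighborSet (.inl v))] : (G ⊕g H).degree (.inl v) = G.degree v := by
  rw [← card_neighborSet_eq_degree, ← card_neighborSet_eq_degree, ← Nat.card_eq_fintype_card,
    ← Nat.card_eq_fintype_card, neighborSet_sum_inl, Nat.card_image_of_injective Sum.inl_injective]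

theorem degree_sum_inr (w : W) [Fintype (H.neighborSet w)]
    [Fintype ((G ⊕g H).neighborSet (.inr w))] : (G ⊕g H).degree (.inr w) = H.degree w := by
  rw [← card_neighborSet_eq_degree, ← card_neighborSet_eq_degree, ← Nat.card_eq_fintype_card,
    ← Nat.card_eq_fintype_card, neighborSet_sum_inr, Nat.card_image_of_injective Sum.inr_injective]

theorem isRegularOfDegree_sum [G.LocallyFinite] [H.LocallyFinite] [(G ⊕g H).LocallyFinite]
    (hG : G.IsRegularOfDegree d) (hH : H.IsRegularOfDegree d) :
    (G ⊕g H).IsRegularOfDegree d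
  | .inl v => (degree_sum_inl v).trans (hG v)
  | .inr w => (degree_sum_inr w).trans (hH w)

theorem isRegularOfDegree_compl_sum [Fintype V] [Fintype W] [G.LocallyFinite] [H.LocallyFinite]
    [(G ⊕g H)ᶜ.LocallyFinite] (hG : G.IsRegularOfDegree d) (hH : H.IsRegularOfDegree d) :
    (G ⊕g H)ᶜ.IsRegularOfDegree (Fintype.card V + Fintype.card W - 1 - d) := fun x => by
  rw [degree_compl, Fintype.card_sum, isRegularOfDegree_sum hG hH x]

end DisjointUnion

section Kuramoto

variable {n k d : ℕ} {G : SimpleGraph (Fin n)}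

theorem kuramotoDeriv_const [G.LocallyFinite] (α : ℝ) (f : ℝ → ℝ) (i : Fin n) (t : ℝ) :
    kuramotoDeriv G α (fun _ => f) i t = -(G.degree i * Real.sin α) := by
  have hfilter : Finset.univ.filter (G.Adj i) = G.neighborFinset i := by ext; simp
  simp [kuramotoDeriv, ← Finset.sum_filter, hfilter]

theorem isKuramotoSol_of_isRegularOfDegree [G.LocallyFinite] (hG : G.IsRegularOfDegree d) (α : ℝ) :
    IsKuramotoSol G α fun _ t => -(d * Real.sin α) * t := by
  intro i t _
  rw [kuramotoDeriv_const, hG i]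
  simpa using (hasDerivWithinAt_id t (Set.Ici 0)).const_mul (-(d * Real.sin α))

theorem isAlphaKuramoto_const_of_isRegularOfDegree [G.LocallyFinite] (hG : G.IsRegularOfDegree d)
    (α : ℝ) (c : Fin k) : IsAlphaKuramoto G α fun _ => c :=
  ⟨_, isKuramotoSol_of_isRegularOfDegree hG α, fun _ _ _ _ _ => rfl, fun _ _ h => absurd rfl h⟩

theorem IsOrbitPartition.exists_iso_apply_eq {P : Fin n → Fin k} (hP : IsOrbitPartition G P)
    {i j : Fin n} (hij : P i = P j) : ∃ σ : G ≃g G, σ i = j := by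
  obtain ⟨π, hπ⟩ := hP
  obtain ⟨m, rfl⟩ := (hπ i j).1 hij
  exact ⟨π ^ m, congrFun (hom_coe_pow (fun σ : G ≃g G => ⇑σ) rfl (fun _ _ => rfl) π m) i⟩

theorem IsOrbitPartition.isVertexTransitive_of_const {c : Fin k}
    (h : IsOrbitPartition G fun _ => c) : IsVertexTransitive G :=
  fun _ _ => h.exists_iso_apply_eq rfl

end Kuramoto

theorem exists_alphaKuramoto_not_orbit_general :
    ∃ (n k : ℕ) (G : SimpleGraph (Fin n)) (P : Fin n → Fin k),
      G.Connected ∧ Function.Surjective P ∧ (∀ α : ℝ, IsAlphaKuramoto G α P) ∧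
      ¬ IsOrbitPartition G P := by
  let G := (cycleGraph 3 ⊕g cycleGraph 4)ᶜ
  have hconn : G.Connected := connected_compl_sum
  have hreg : G.IsRegularOfDegree 4 := isRegularOfDegree_compl_sum
    (fun _ => cycleGraph_degree_three_le) (fun _ => cycleGraph_degree_three_le)
  have htrans : ¬ IsVertexTransitive G :=
    not_isVertexTransitive_compl_sum cycleGraph_connected cycleGraph_connected (by simp)
  let e : G ≃g G.overFin (n := 7) rfl := G.overFinIso rfl
  exact ⟨7, 1, G.overFin rfl, fun _ => 0, e.connected_iff.1 hconn,
    fun _ => ⟨0, Subsingleton.elim _ _⟩,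
    fun α => isAlphaKuramoto_const_of_isRegularOfDegree (isRegularOfDegree_of_iso hreg e) α 0,
    fun hP => htrans (hP.isVertexTransitive_of_const.of_iso e.symm)⟩

/-- **Proposition.** Not every `α`-Kuramoto partition is an orbit partition: there exist
a connected finite simple graph `G`, a parameter `α ∈ (0, π/2)`, and an `α`-Kuramoto
partition of `G` that is not an orbit partition of `G`. -/
theorem exists_alphaKuramoto_not_orbit :
    ∃ (n k : ℕ) (G : SimpleGraph (Fin n)) (α : ℝ) (P : Fin n → Fin k),
      G.Connected ∧ α ∈ Set.Ioo 0 (Real.pi / 2) ∧ Function.Surjective P ∧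
      IsAlphaKuramoto G α P ∧ ¬ IsOrbitPartition G P := by
  obtain ⟨n, k, G, P, hG, hP, hα, horbit⟩ := exists_alphaKuramoto_not_orbit_general
  exact ⟨n, k, G, 1, P, hG, ⟨one_pos, by linarith [Real.pi_gt_three]⟩, hP, hα 1, horbit⟩
end

section
/- Let p ≥ 4 be even and let G be the graph on 2p+1 vertices whose adjacency matrix is the block matrix [[0, 1_p^T, 0_p^T],[1_p, 0_{p×p}, I_p],[0_p, I_p, B]], where B is the adjacency matrix of p/2 independent edges (a perfect matching on p vertices). Let α = arctan(√(3p² − 4p − 4)/(p − 2)) and let β = arccos((p+2)/(2p)) − α. Then the functions θ_1(t) = p sin(β) t and θ_j(t) = arccos((p+2)/(2p)) + p sin(β) t for j = 2,…,2p+1 form a solution of the frustrated Kuramoto model on G with parameter α. -/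
open scoped Classical

/-- Adjacency (on 0-based natural-number labels) of the graph on `2p+1` vertices whose
adjacency matrix is the block matrix `[[0, 1ₚᵀ, 0ₚᵀ], [1ₚ, 0ₚₓₚ, Iₚ], [0ₚ, Iₚ, B]]`,
where `B` is the adjacency matrix of `p/2` independent edges (pairing vertices
`p+1, p+2`, then `p+3, p+4`, etc.). Vertex `0` is the hub, vertices `1,…,p` the middle
layer, vertices `p+1,…,2p` the outer layer. -/
def linearAdj (p a b : ℕ) : Prop :=
  (a = 0 ∧ 1 ≤ b ∧ b ≤ p) ∨ (b = 0 ∧ 1 ≤ a ∧ a ≤ p) ∨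
  (1 ≤ a ∧ a ≤ p ∧ b = a + p) ∨ (1 ≤ b ∧ b ≤ p ∧ a = b + p) ∨
  (p + 1 ≤ a ∧ (a - p) % 2 = 1 ∧ b = a + 1) ∨
  (p + 1 ≤ b ∧ (b - p) % 2 = 1 ∧ a = b + 1)

/-!
In a frame rotating with angular velocity `ω`, the phases `φ i + ω t` solve the model if and only
if the couplings `sin (φ j - φ i - α)` over the neighbours `j` of each vertex `i` sum to `ω`.
Put a hub at phase `0` and every other vertex at phase `c`. If `sin (c + α) = sin α`, then every
edge leaving a vertex other than the hub contributes `-sin α`, whether or not it leads to the hub.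
So only degrees matter: when the hub has degree `D` and all other vertices have degree `d`, it
remains to solve `D sin (c - α) = -d sin α`. With `c = π - 2 α` this reads
`D (3 - 4 sin² α) = -d`, that is `cos² α = (D - d) / (4 D)`, whence `cos c = (D + d) / (2 D)`.
-/

section PhaseLocked

variable {n : ℕ} {G : SimpleGraph (Fin n)} {α c ω : ℝ}

lemma kuramotoDeriv_add_mul (φ : Fin n → ℝ) (i : Fin n) (t : ℝ) :
    kuramotoDeriv G α (fun j s => φ j + ω * s) i t =
      ∑ j ∈ G.neighborFinset i, Real.sin (φ j - φ i - α) := by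
  simp only [kuramotoDeriv, add_sub_add_right_eq_sub, SimpleGraph.neighborFinset_eq_filter,
    Finset.sum_filter]

lemma isKuramotoSol_add_mul {φ : Fin n → ℝ}
    (hφ : ∀ i, ∑ j ∈ G.neighborFinset i, Real.sin (φ j - φ i - α) = ω) :
    IsKuramotoSol G α (fun i t => φ i + ω * t) := by
  intro i t _
  rw [kuramotoDeriv_add_mul, hφ]
  exact ((hasDerivAt_const_mul ω).const_add (φ i)).hasDerivWithinAt

/-- The phase profile of a two-cluster state: the hub `h` at phase `0` and all other vertices
at phase `c`. -/
noncomputable def hubPhase (h : Fin n) (c : ℝ) (i : Fin n) : ℝ :=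
  if i = h then 0 else c

lemma hubPhase_self (h : Fin n) : hubPhase h c h = 0 := if_pos rfl

lemma hubPhase_of_ne {h i : Fin n} (hi : i ≠ h) : hubPhase h c i = c := if_neg hi

lemma sum_sin_neighborFinset_hub (h : Fin n) :
    ∑ j ∈ G.neighborFinset h, Real.sin (hubPhase h c j - hubPhase h c h - α) =
      G.degree h * Real.sin (c - α) := by
  have hterm : ∀ j ∈ G.neighborFinset h,
      Real.sin (hubPhase h c j - hubPhase h c h - α) = Real.sin (c - α) := by
    intro j hj
    have hjh : j ≠ h := ((G.mem_neighborFinset h j).mp hj).ne'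
    rw [hubPhase_of_ne hjh, hubPhase_self, sub_zero]
  rw [Finset.sum_congr rfl hterm, Finset.sum_const, G.card_neighborFinset_eq_degree,
    nsmul_eq_mul]

lemma sum_sin_neighborFinset_of_ne_hub (hc : Real.sin (c + α) = Real.sin α) {h i : Fin n}
    (hi : i ≠ h) :
    ∑ j ∈ G.neighborFinset i, Real.sin (hubPhase h c j - hubPhase h c i - α) =
      -(G.degree i * Real.sin α) := by
  have hterm : ∀ j ∈ G.neighborFinset i,
      Real.sin (hubPhase h c j - hubPhase h c i - α) = -Real.sin α := by
    intro j _
    rw [hubPhase_of_ne hi]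
    rcases eq_or_ne j h with rfl | hj
    · rw [hubPhase_self, zero_sub, ← neg_add', Real.sin_neg, hc]
    · rw [hubPhase_of_ne hj, sub_self, zero_sub, Real.sin_neg]
  rw [Finset.sum_congr rfl hterm, Finset.sum_const, G.card_neighborFinset_eq_degree,
    nsmul_eq_mul, mul_neg]

lemma isKuramotoSol_hub {h : Fin n} {D d : ℕ} (hD : G.degree h = D) (hd : ∀ i ≠ h, G.degree i = d)
    (hadd : Real.sin (c + α) = Real.sin α)
    (hsub : D * Real.sin (c - α) = -(d * Real.sin α)) :
    IsKuramotoSol G α (fun i t => hubPhase h c i + D * Real.sin (c - α) * t) := by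
  refine isKuramotoSol_add_mul fun i => ?_
  rcases eq_or_ne i h with rfl | hi
  · rw [sum_sin_neighborFinset_hub, hD]
  · rw [sum_sin_neighborFinset_of_ne_hub hadd hi, hd i hi, hsub]

end PhaseLocked

section PhaseAngles

variable {D d : ℝ}

lemma cos_arccos_add_div_two_mul (hlow : -(3 * D) ≤ d) (hlt : d < D) :
    Real.cos (Real.arccos ((D + d) / (2 * D))) = (D + d) / (2 * D) := by
  have hD : 0 < 2 * D := by linarith
  apply Real.cos_arccos
  · rw [le_div_iff₀ hD]; linarith
  · rw [div_le_one hD]; linarith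

lemma sin_arccos_add_div_two_mul (hD : 0 < D) :
    Real.sin (Real.arccos ((D + d) / (2 * D))) =
      √(3 * D ^ 2 - 2 * d * D - d ^ 2) / (2 * D) := by
  have hsq : 1 - ((D + d) / (2 * D)) ^ 2 =
      (3 * D ^ 2 - 2 * d * D - d ^ 2) / (2 * D) ^ 2 := by
    field_simp
    ring
  rw [Real.sin_arccos, hsq, Real.sqrt_div' _ (by positivity), Real.sqrt_sq (by positivity)]

lemma sin_arctan_div_mul {x y : ℝ} (hy : y ≠ 0) :
    Real.sin (Real.arctan (x / y)) * y = x * Real.cos (Real.arctan (x / y)) := by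
  rw [← Real.tan_mul_cos (Real.cos_arctan_pos _).ne', Real.tan_arctan]
  field_simp

variable {s α c : ℝ}

lemma sin_add_eq_sin_of_cos_eq_of_sin_eq (hD : D ≠ 0)
    (hcos : Real.cos c = (D + d) / (2 * D)) (hsin : Real.sin c = s / (2 * D))
    (hα : Real.sin α * (D - d) = s * Real.cos α) :
    Real.sin (c + α) = Real.sin α := by
  rw [Real.sin_add, hcos, hsin]
  field_simp
  linear_combination -hα

lemma mul_sin_sub_eq_neg_mul_sin_of_cos_eq_of_sin_eq (hD : D ≠ 0)
    (hcos : Real.cos c = (D + d) / (2 * D)) (hsin : Real.sin c = s / (2 * D))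
    (hα : Real.sin α * (D - d) = s * Real.cos α) :
    D * Real.sin (c - α) = -(d * Real.sin α) := by
  rw [Real.sin_sub, hcos, hsin]
  field_simp
  linear_combination -hα

end PhaseAngles

section LinearAdj

variable {p a b : ℕ}

lemma linearAdj_zero_left_iff : linearAdj p 0 b ↔ b ∈ Finset.Icc 1 p := by
  rw [linearAdj, Finset.mem_Icc]
  omega

lemma linearAdj_iff_of_le (ha : 0 < a) (hap : a ≤ p) :
    linearAdj p a b ↔ b = 0 ∨ b = a + p := by
  unfold linearAdj
  omega

lemma linearAdj_iff_of_sub_mod_two_eq_one (hpa : p < a) (hodd : (a - p) % 2 = 1)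
    (ha : a ≤ 2 * p) : linearAdj p a b ↔ b = a - p ∨ b = a + 1 := by
  unfold linearAdj
  omega

lemma linearAdj_iff_of_sub_mod_two_eq_zero (hpa : p < a) (heven : (a - p) % 2 = 0)
    (ha : a ≤ 2 * p) : linearAdj p a b ↔ b = a - p ∨ b = a - 1 := by
  unfold linearAdj
  omega

lemma degree_eq_two_of_adj_iff_val_eq {n : ℕ} {G : SimpleGraph (Fin n)} {i : Fin n} {x y : ℕ}
    (hx : x < n) (hy : y < n) (hxy : x ≠ y)
    (hadj : ∀ j : Fin n, G.Adj i j ↔ (j : ℕ) = x ∨ (j : ℕ) = y) : G.degree i = 2 := by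
  rw [← G.card_neighborFinset_eq_degree, Finset.card_eq_two]
  refine ⟨⟨x, hx⟩, ⟨y, hy⟩, by simpa only [ne_eq, Fin.mk.injEq] using hxy, ?_⟩
  ext j
  simp only [SimpleGraph.mem_neighborFinset, hadj, Finset.mem_insert, Finset.mem_singleton,
    Fin.ext_iff]

variable {G : SimpleGraph (Fin (2 * p + 1))}

lemma degree_zero_of_linearAdj
    (hG : ∀ a b : Fin (2 * p + 1), G.Adj a b ↔ linearAdj p (a : ℕ) (b : ℕ)) :
    G.degree 0 = p := by
  have hmap : (G.neighborFinset 0).map Fin.valEmbedding = Finset.Icc 1 p := by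
    ext b
    simp only [Finset.mem_map, SimpleGraph.mem_neighborFinset, hG, Fin.val_zero,
      linearAdj_zero_left_iff, Fin.valEmbedding_apply]
    constructor
    · rintro ⟨j, hj, rfl⟩
      exact hj
    · intro hb
      have hbp := (Finset.mem_Icc.mp hb).2
      exact ⟨⟨b, by omega⟩, hb, rfl⟩
  rw [← G.card_neighborFinset_eq_degree, ← Finset.card_map, hmap, Nat.card_Icc,
    Nat.add_sub_cancel]

lemma degree_eq_two_of_linearAdj
    (hG : ∀ a b : Fin (2 * p + 1), G.Adj a b ↔ linearAdj p (a : ℕ) (b : ℕ))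
    (hp : Even p) {i : Fin (2 * p + 1)} (hi : i ≠ 0) :
    G.degree i = 2 := by
  have hlt := i.isLt
  have hpos : 0 < (i : ℕ) := Fin.pos_iff_ne_zero.mpr hi
  rcases le_or_gt (i : ℕ) p with hip | hpi
  · exact degree_eq_two_of_adj_iff_val_eq (by omega) (by omega) (by omega)
      fun j => (hG i j).trans (linearAdj_iff_of_le hpos hip)
  obtain ⟨k, rfl⟩ := hp
  rcases Nat.mod_two_eq_zero_or_one (i - (k + k)) with heven | hodd
  · exact degree_eq_two_of_adj_iff_val_eq (by omega) (by omega) (by omega)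
      fun j => (hG i j).trans (linearAdj_iff_of_sub_mod_two_eq_zero hpi heven (by omega))
  · exact degree_eq_two_of_adj_iff_val_eq (by omega) (by omega) (by omega)
      fun j => (hG i j).trans (linearAdj_iff_of_sub_mod_two_eq_one hpi hodd (by omega))

end LinearAdj

theorem linear_example_solution_general {n : ℕ} {G : SimpleGraph (Fin n)} {h : Fin n}
    {p d : ℕ} (hdp : d < p) (hhub : G.degree h = p) (hd : ∀ i ≠ h, G.degree i = d) {α β : ℝ}
    (hα : α = Real.arctan (√(3 * (p : ℝ) ^ 2 - 2 * d * p - d ^ 2) / ((p : ℝ) - d)))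
    (hβ : β = Real.arccos (((p : ℝ) + d) / (2 * p)) - α) :
    IsKuramotoSol G α (fun i t =>
      if i = h then (p : ℝ) * Real.sin β * t
      else Real.arccos (((p : ℝ) + d) / (2 * p)) + (p : ℝ) * Real.sin β * t) := by
  have hlt : (d : ℝ) < p := Nat.cast_lt.mpr hdp
  have hd0 : (0 : ℝ) ≤ d := d.cast_nonneg
  have hp0 : (0 : ℝ) < p := hd0.trans_lt hlt
  have hcos := cos_arccos_add_div_two_mul (by linarith) hlt
  have hsin := sin_arccos_add_div_two_mul (d := d) hp0
  have htan := sin_arctan_div_mul (x := √(3 * (p : ℝ) ^ 2 - 2 * d * p - d ^ 2))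
    (sub_pos.mpr hlt).ne'
  rw [← hα] at htan
  have hadd := sin_add_eq_sin_of_cos_eq_of_sin_eq hp0.ne' hcos hsin htan
  have hsub := mul_sin_sub_eq_neg_mul_sin_of_cos_eq_of_sin_eq hp0.ne' hcos hsin htan
  simpa only [hubPhase, ite_add, zero_add, ← hβ] using isKuramotoSol_hub hhub hd hadd hsub

/-- **Example.** For even `p ≥ 4` and the block-matrix graph above, with
`α = arctan(√(3p² - 4p - 4)/(p - 2))` and `β = arccos((p+2)/(2p)) - α`, the phases
`θ₀(t) = p sin(β) t` and `θⱼ(t) = arccos((p+2)/(2p)) + p sin(β) t` for `j ≠ 0` solve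
the frustrated Kuramoto model with parameter `α`. -/
theorem linear_example_solution (p : ℕ) (hp : 4 ≤ p) (hpe : Even p)
    (G : SimpleGraph (Fin (2 * p + 1)))
    (hG : ∀ a b : Fin (2 * p + 1), G.Adj a b ↔ linearAdj p (a : ℕ) (b : ℕ))
    (α β : ℝ)
    (hα : α = Real.arctan (Real.sqrt (3 * (p : ℝ) ^ 2 - 4 * p - 4) / ((p : ℝ) - 2)))
    (hβ : β = Real.arccos (((p : ℝ) + 2) / (2 * p)) - α) :
    IsKuramotoSol G α (fun i t =>
      if (i : ℕ) = 0 then (p : ℝ) * Real.sin β * t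
      else Real.arccos (((p : ℝ) + 2) / (2 * p)) + (p : ℝ) * Real.sin β * t) := by
  simpa only [Fin.val_eq_zero_iff, Nat.cast_ofNat] using linear_example_solution_general (by omega)
    (degree_zero_of_linearAdj hG) (fun _ => degree_eq_two_of_linearAdj hG hpe)
    (by rw [hα]; norm_num) (by rw [hβ, Nat.cast_ofNat])
end
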